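/- The pessimistic distortion of the class of median schemes over 6 voters is at most 1.80: for every m ≥ 1, every 6-tuple of budgets (P_1,…,P_6) ∈ 𝔹^6 on m projects, and every family (p^Q), indexed by the 3-element subsets Q of [6], such that each p^Q ∈ 𝔹 is a median-scheme outcome for the triple (P_q)_{q∈Q}, one has (1/60) Σ_{Q, |Q|=3} Σ_{i∈[6]∖Q} d(p^Q, P_i) ≤ 1.80 · (1/6) · min_{v∈𝔹} Σ_{i=1}^6 d(v, P_i). -/

import Mathlib

/-- A budget on `m` projects: nonnegative allocations summing to 1. -/
def IsBudget {m : ℕ} (b : Fin m → ℝ) : Prop :=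
  (∀ j, 0 ≤ b j) ∧ ∑ j, b j = 1

/-- The ℓ₁ cost `d(a,b)`. -/
noncomputable def cost {m : ℕ} (a b : Fin m → ℝ) : ℝ := ∑ j, |a j - b j|

/-- The overlap utility `u(a,b)`. -/
noncomputable def util {m : ℕ} (a b : Fin m → ℝ) : ℝ := ∑ j, min (a j) (b j)

/-- `z` is a median-scheme outcome for `(a,b,c)`: a budget maximizing
`u(z,a) + u(z,b) + u(z,c)` over all budgets. -/
def MedianOutcome {m : ℕ} (a b c z : Fin m → ℝ) : Prop :=
  IsBudget z ∧ ∀ z' : Fin m → ℝ, IsBudget z' →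
    util z' a + util z' b + util z' c ≤ util z a + util z b + util z c

/-- `z` is a median-scheme outcome for the triple of budgets `(w_r)_{r∈R}`:
a budget maximizing `Σ_{r∈R} u(z, w_r)` over all budgets. -/
def MedianOutcomeOn {m : ℕ} {ι : Type*} [Fintype ι]
    (w : ι → Fin m → ℝ) (R : Finset ι) (z : Fin m → ℝ) : Prop :=
  IsBudget z ∧ ∀ z' : Fin m → ℝ, IsBudget z' →
    ∑ r ∈ R, util z' (w r) ≤ ∑ r ∈ R, util z (w r)

/-!
Cut the unit squares of all projects into slices: the slice of project `j` at level `t` is approved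
by the voters who give `j` at least `t`. A budget buys the slices below its allocations, and its
utility for a voter is the mass of bought slices which that voter approves, so only the mass of
each approval set `S ⊆ [6]` matters. By complementary slackness, if the slices approved by a
majority of a triple `Q` have mass at least `1` ("`Q` is high"), then the median outcome of `Q`
buys all slices approved unanimously by `Q` and nothing outside the majority slices; if they have
mass at most `1`, it buys all of them and nothing that no member of `Q` approves. Either way this
yields linear lower bounds on the utility of the outcome for the other voters. Fixing which triples
are high, the distortion bound becomes a consequence of linear inequalities in the masses, certified
by dual multipliers. Up to relabelling of the voters few patterns of high triples remain, and a
partial pattern often suffices for a certificate.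
-/

open Finset MeasureTheory

theorem IsBudget.apply_le_one {m : ℕ} {b : Fin m → ℝ} (hb : IsBudget b) (j : Fin m) : b j ≤ 1 :=
  hb.2 ▸ single_le_sum (fun i _ => hb.1 i) (mem_univ j)

namespace MedianScheme

section Budgets

variable {m : ℕ}

theorem cost_eq_two_sub_two_mul_util {a b : Fin m → ℝ} (ha : IsBudget a) (hb : IsBudget b) :
    cost a b = 2 - 2 * util a b := by
  have habs (j : Fin m) : |a j - b j| = a j + b j - 2 * min (a j) (b j) := by
    rw [← max_sub_min_eq_abs', ← max_add_min (a j) (b j)]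
    ring
  simp only [cost, util, habs, sum_sub_distrib, sum_add_distrib, ha.2, hb.2, ← mul_sum]
  norm_num

theorem exists_isBudget_mem_Icc {L H : Fin m → ℝ} (hL₀ : 0 ≤ L) (hLH : L ≤ H)
    (hL : ∑ j, L j ≤ 1) (hH : 1 ≤ ∑ j, H j) : ∃ w ∈ Set.Icc L H, IsBudget w := by
  have hcont : ContinuousOn (fun s : ℝ => ∑ j, (L j + s * (H j - L j))) (Set.Icc 0 1) := by
    fun_prop
  obtain ⟨s, ⟨hs₀, hs₁⟩, hs⟩ := intermediate_value_Icc zero_le_one hcont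
    (show (1 : ℝ) ∈ _ by simpa using ⟨hL, hH⟩)
  have hmem : (fun j => L j + s * (H j - L j)) ∈ Set.Icc L H :=
    ⟨fun j => by nlinarith [hLH j], fun j => by nlinarith [hLH j]⟩
  exact ⟨_, hmem, hL₀.trans hmem.1, hs⟩

end Budgets

section Levels

variable {ι : Type*} [Fintype ι] {m : ℕ} {P : ι → Fin m → ℝ} {y z : Fin m → ℝ}

/-- The set of voters who give project `j` at least `t`. -/
noncomputable def approvers (P : ι → Fin m → ℝ) (j : Fin m) (t : ℝ) : Finset ι :=
  {i | t ≤ P i j}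

/-- The part of the expenditure `z` approved by exactly the voters in `S`: an expenditure is cut
into unit slices, the slice of project `j` at level `t ∈ (0, z j]` being approved by the voters
who give `j` at least `t`. -/
noncomputable def levelMass (P : ι → Fin m → ℝ) (z : Fin m → ℝ) (S : Finset ι) : ℝ :=
  ∑ j, volume.real {t ∈ Set.Ioc 0 (z j) | approvers P j t = S}

theorem mem_approvers {j : Fin m} {t : ℝ} {i : ι} : i ∈ approvers P j t ↔ t ≤ P i j := by
  simp [approvers]

theorem measurableSet_approvers_eq (P : ι → Fin m → ℝ) (j : Fin m) (S : Finset ι) :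
    MeasurableSet {t | approvers P j t = S} := by
  simp only [Finset.ext_iff, mem_approvers, Set.ofPred_forall]
  exact .iInter fun i => measurableSet_Iic.iff (.const _)

theorem levelMass_nonneg (P : ι → Fin m → ℝ) (z : Fin m → ℝ) (S : Finset ι) :
    0 ≤ levelMass P z S :=
  sum_nonneg fun _ _ => measureReal_nonneg

theorem volume_approvers_eq_ne_top (P : ι → Fin m → ℝ) (z : Fin m → ℝ) (j : Fin m)
    (S : Finset ι) : volume {t ∈ Set.Ioc 0 (z j) | approvers P j t = S} ≠ ⊤ :=
  measure_ne_top_of_subset (Set.sep_subset _ _) measure_Ioc_lt_top.ne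

theorem levelMass_mono (hyz : y ≤ z) (S : Finset ι) : levelMass P y S ≤ levelMass P z S :=
  sum_le_sum fun j _ => measureReal_mono
    (fun _ ht => ⟨Set.Ioc_subset_Ioc_right (hyz j) ht.1, ht.2⟩)
    (volume_approvers_eq_ne_top P z j S)

theorem sum_filter_levelMass {p : Finset ι → Prop} [DecidablePred p] {c : Fin m → ℝ} (hc : 0 ≤ c)
    (h : ∀ j t, t ≤ z j ∧ p (approvers P j t) ↔ t ≤ c j) :
    ∑ S with p S, levelMass P z S = ∑ j, c j := by
  simp only [levelMass]
  rw [sum_comm]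
  refine sum_congr rfl fun j _ => ?_
  rw [← measureReal_biUnion_finset ?_ ?_ fun S _ => volume_approvers_eq_ne_top P z j S]
  · have hunion : ⋃ S ∈ ({S | p S} : Finset (Finset ι)),
        {t ∈ Set.Ioc 0 (z j) | approvers P j t = S} = Set.Ioc 0 (c j) := by
      ext t
      simpa [and_assoc] using fun _ => h j t
    rw [hunion, Real.volume_real_Ioc_of_le (show 0 ≤ c j from hc j), sub_zero]
  · exact fun S _ T _ hST => Set.disjoint_left.2 fun t hS hT => hST (hS.2.symm.trans hT.2)
  · exact fun S _ => measurableSet_Ioc.inter (measurableSet_approvers_eq P j S)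

theorem sum_levelMass (P : ι → Fin m → ℝ) (hz : IsBudget z) : ∑ S, levelMass P z S = 1 := by
  rw [← hz.2, ← sum_filter_levelMass (P := P) (p := fun _ => True) (z := z) hz.1 (by simp)]
  simp

theorem sum_levelMass_mem [DecidableEq ι] (hz : 0 ≤ z) {i : ι} (hi : 0 ≤ P i) :
    ∑ S with i ∈ S, levelMass P z S = util z (P i) :=
  sum_filter_levelMass (fun j => le_min (hz j) (hi j)) fun _ _ => by
    rw [mem_approvers, le_min_iff]

theorem sum_levelMass_one_mem [DecidableEq ι] {i : ι} (hi : IsBudget (P i)) :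
    ∑ S with i ∈ S, levelMass P 1 S = 1 := by
  rw [sum_levelMass_mem zero_le_one hi.1, util, ← hi.2]
  exact sum_congr rfl fun j _ => min_eq_right (hi.apply_le_one j)

theorem sum_util_eq_sum_card_mul_levelMass [DecidableEq ι] (hP : ∀ i, 0 ≤ P i) (hz : 0 ≤ z)
    (R : Finset ι) : ∑ i ∈ R, util z (P i) = ∑ S, (#(S ∩ R) : ℝ) * levelMass P z S := by
  simp only [← sum_levelMass_mem hz (hP _), sum_filter]
  rw [sum_comm]
  refine sum_congr rfl fun S _ => ?_
  rw [← sum_filter, sum_const, nsmul_eq_mul, filter_mem_eq_inter, inter_comm]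

theorem sum_util_le (hP : ∀ i, 0 ≤ P i) (hz : IsBudget z) (θ : ℕ) :
    ∑ i, util z (P i) ≤ θ + ∑ S, ((#S - θ : ℕ) : ℝ) * levelMass P 1 S := by
  classical
  have hterm (S : Finset ι) : (#S - θ : ℝ) * levelMass P z S ≤ (#S - θ : ℕ) * levelMass P 1 S := by
    calc _ ≤ ((#S - θ : ℕ) : ℝ) * levelMass P z S := by
          gcongr
          · exact levelMass_nonneg P z S
          · exact sub_le_iff_le_add.2 (mod_cast le_tsub_add)
      _ ≤ _ := by
          gcongr
          exact levelMass_mono hz.apply_le_one S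
  calc ∑ i, util z (P i) = θ + ∑ S, (#S - θ : ℝ) * levelMass P z S := by
        simp only [sub_mul, sum_sub_distrib, ← mul_sum, sum_levelMass P hz]
        rw [sum_util_eq_sum_card_mul_levelMass hP hz.1]
        simp
    _ ≤ _ := by gcongr θ + ?_; exact sum_le_sum fun S _ => hterm S

end Levels

section Slackness

theorem exists_forall_le_card_filter_iff {ι α : Type*} [LinearOrder α] (f : ι → α) {Q : Finset ι}
    {k : ℕ} (hk : 1 ≤ k) (hkQ : k ≤ #Q) : ∃ c, ∀ t, k ≤ #{i ∈ Q | t ≤ f i} ↔ t ≤ c := by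
  have hmin : ∀ A ∈ powersetCard k Q, ∃ c, ∀ t, (∀ i ∈ A, t ≤ f i) ↔ t ≤ c := fun A hA => by
    have hne : A.Nonempty := card_pos.1 (by rw [(mem_powersetCard.1 hA).2]; exact hk)
    exact ⟨A.inf' hne f, fun t => (le_inf'_iff hne f).symm⟩
  have hsub (t : α) : k ≤ #{i ∈ Q | t ≤ f i} ↔ ∃ A ∈ powersetCard k Q, ∀ i ∈ A, t ≤ f i := by
    constructor
    · intro h
      obtain ⟨A, hA, hcard⟩ := exists_subset_card_eq h
      exact ⟨A, mem_powersetCard.2 ⟨hA.trans (filter_subset _ _), hcard⟩,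
        fun i hi => (mem_filter.1 (hA hi)).2⟩
    · rintro ⟨A, hA, hle⟩
      obtain ⟨hAQ, rfl⟩ := mem_powersetCard.1 hA
      exact card_le_card fun i hi => mem_filter.2 ⟨hAQ hi, hle i hi⟩
  obtain ⟨i, -⟩ := card_pos.1 (hk.trans hkQ)
  have : Nonempty α := ⟨f i⟩
  choose! c hc using hmin
  refine ⟨(powersetCard k Q).sup' (powersetCard_nonempty.2 hkQ) c, fun t => ?_⟩
  rw [hsub, le_sup'_iff]
  exact exists_congr fun A => and_congr_right fun hA => hc A hA t

variable {ι : Type*} [Fintype ι] [DecidableEq ι] {m : ℕ} {P : ι → Fin m → ℝ} {z : Fin m → ℝ}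
  {Q : Finset ι} {k : ℕ}

theorem exists_forall_le_card_approvers_inter_iff (P : ι → Fin m → ℝ) (hk : 1 ≤ k) (hkQ : k ≤ #Q) :
    ∃ c : Fin m → ℝ, ∀ j t, k ≤ #(approvers P j t ∩ Q) ↔ t ≤ c j := by
  choose c hc using fun j => exists_forall_le_card_filter_iff (Q := Q) (P · j) hk hkQ
  refine ⟨c, fun j t => ?_⟩
  rw [← hc, approvers, filter_inter, univ_inter]

theorem sum_filter_levelMass_le_card_inter (hP : ∀ i, IsBudget (P i)) {c : Fin m → ℝ} (hk : 1 ≤ k)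
    (hkQ : k ≤ #Q) (hc : ∀ j t, k ≤ #(approvers P j t ∩ Q) ↔ t ≤ c j) :
    0 ≤ c ∧ ∑ S with k ≤ #(S ∩ Q), levelMass P 1 S = ∑ j, c j := by
  have hc₀ : 0 ≤ c := fun j => (hc j 0).1 <| by
    have huniv : approvers P j 0 = univ := by simpa [approvers] using fun i => (hP i).1 j
    rwa [huniv, univ_inter]
  have hc₁ : c ≤ 1 := fun j => by
    obtain ⟨i, hi⟩ := card_pos.1 (hk.trans ((hc j (c j)).2 le_rfl))
    exact (mem_approvers.1 (mem_inter.1 hi).1).trans ((hP i).apply_le_one j)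
  exact ⟨hc₀, sum_filter_levelMass hc₀ fun j t => by
    rw [hc]; exact and_iff_right_of_imp fun h => h.trans (hc₁ j)⟩

theorem exists_isBudget_levelMass_eq (hP : ∀ i, IsBudget (P i)) (hk : 1 ≤ k) (hkQ : k < #Q)
    (hgt : ∑ S with k + 1 ≤ #(S ∩ Q), levelMass P 1 S ≤ 1)
    (hge : 1 ≤ ∑ S with k ≤ #(S ∩ Q), levelMass P 1 S) :
    ∃ w, IsBudget w ∧ (∀ S, k < #(S ∩ Q) → levelMass P w S = levelMass P 1 S) ∧
      ∀ S, #(S ∩ Q) < k → levelMass P w S = 0 := by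
  obtain ⟨H, hH⟩ := exists_forall_le_card_approvers_inter_iff P hk hkQ.le
  obtain ⟨L, hL⟩ := exists_forall_le_card_approvers_inter_iff P (Nat.le_add_left 1 k) hkQ
  have hLH : L ≤ H := fun j => (hH j _).1 (Nat.le_of_succ_le ((hL j _).2 le_rfl))
  obtain ⟨hL₀, hLsum⟩ := sum_filter_levelMass_le_card_inter hP (Nat.le_add_left 1 k) hkQ hL
  rw [hLsum] at hgt
  rw [(sum_filter_levelMass_le_card_inter hP hk hkQ.le hH).2] at hge
  obtain ⟨w, ⟨hLw, hwH⟩, hw⟩ := exists_isBudget_mem_Icc hL₀ hLH hgt hge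
  refine ⟨w, hw, fun S hS => ?_, fun S hS => ?_⟩
  · refine le_antisymm (levelMass_mono hw.apply_le_one S) (sum_le_sum fun j _ => ?_)
    refine measureReal_mono ?_ (volume_approvers_eq_ne_top P w j S)
    rintro t ⟨ht, rfl⟩
    exact ⟨⟨ht.1, ((hL j t).1 hS).trans (hLw j)⟩, rfl⟩
  · refine sum_eq_zero fun j _ => ?_
    have hempty : {t ∈ Set.Ioc 0 (w j) | approvers P j t = S} = ∅ := by
      refine Set.eq_empty_of_forall_notMem ?_
      rintro t ⟨ht, rfl⟩
      exact hS.not_ge ((hH j t).2 (ht.2.trans (hwH j)))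
    rw [hempty, measureReal_empty]

theorem levelMass_eq_of_medianOutcomeOn (hz : MedianOutcomeOn P Q z) (hP : ∀ i, IsBudget (P i))
    (hk : 1 ≤ k) (hkQ : k < #Q) (hgt : ∑ S with k + 1 ≤ #(S ∩ Q), levelMass P 1 S ≤ 1)
    (hge : 1 ≤ ∑ S with k ≤ #(S ∩ Q), levelMass P 1 S) :
    (∀ S, k < #(S ∩ Q) → levelMass P z S = levelMass P 1 S) ∧
      ∀ S, #(S ∩ Q) < k → levelMass P z S = 0 := by
  -- Complementary slackness: the utility of a budget `b` for `Q` exceeds `k` by the sum of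
  -- `(#(S ∩ Q) - k) * levelMass P b S`, and `w` maximizes each term of this sum.
  obtain ⟨w, hw, hw_gt, hw_lt⟩ := exists_isBudget_levelMass_eq hP hk hkQ hgt hge
  have hutil {b : Fin m → ℝ} (hb : IsBudget b) : ∑ i ∈ Q, util b (P i) =
      k + ∑ S, (#(S ∩ Q) - k : ℝ) * levelMass P b S := by
    simp only [sum_util_eq_sum_card_mul_levelMass (fun i => (hP i).1) hb.1, sub_mul,
      sum_sub_distrib, ← mul_sum, sum_levelMass P hb]
    ring
  have hterm (S : Finset ι) :
      (#(S ∩ Q) - k : ℝ) * levelMass P z S ≤ (#(S ∩ Q) - k : ℝ) * levelMass P w S := by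
    rcases lt_trichotomy (#(S ∩ Q)) k with h | h | h
    · rw [hw_lt S h, mul_zero]
      exact mul_nonpos_of_nonpos_of_nonneg (sub_nonpos.2 (mod_cast h.le)) (levelMass_nonneg P z S)
    · simp [h]
    · rw [hw_gt S h]
      exact mul_le_mul_of_nonneg_left (levelMass_mono hz.1.apply_le_one S)
        (sub_nonneg.2 (mod_cast h.le))
  have hsum : ∑ S, (#(S ∩ Q) - k : ℝ) * levelMass P z S =
      ∑ S, (#(S ∩ Q) - k : ℝ) * levelMass P w S := by
    refine (sum_le_sum fun S _ => hterm S).antisymm ?_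
    have hopt := hz.2 w hw
    rwa [hutil hw, hutil hz.1, add_le_add_iff_left] at hopt
  have heq (S : Finset ι) (hS : #(S ∩ Q) ≠ k) : levelMass P z S = levelMass P w S :=
    mul_left_cancel₀ (sub_ne_zero.2 (mod_cast hS))
      ((sum_eq_sum_iff_of_le fun S _ => hterm S).1 hsum S (mem_univ S))
  exact ⟨fun S h => (heq S h.ne').trans (hw_gt S h), fun S h => (heq S h.ne).trans (hw_lt S h)⟩

/-- The coefficient, in a lower bound for `D` times the total utility of the voters outside `Q`, of
the mass approved by `a` voters of `Q` and `b` others. It is `D * b - θ` if the outcome is bound to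
contain that mass (`k < a`), `0` if it is bound to avoid it (`a < k`), and the lesser of the two if
it is free to choose. -/
def cutWeight (k D θ a b : ℕ) : ℤ :=
  if k < a then D * b - θ else if a = k then min (D * b - θ) 0 else 0

theorem add_sum_cutWeight_mul_le (hz : MedianOutcomeOn P Q z) (hP : ∀ i, IsBudget (P i))
    (hk : 1 ≤ k) (hkQ : k < #Q) (hgt : ∑ S with k + 1 ≤ #(S ∩ Q), levelMass P 1 S ≤ 1)
    (hge : 1 ≤ ∑ S with k ≤ #(S ∩ Q), levelMass P 1 S) (D θ : ℕ) :
    θ + ∑ S, (cutWeight k D θ #(S ∩ Q) #(S \ Q) : ℝ) * levelMass P 1 S ≤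
      D * ∑ i ∈ Qᶜ, util z (P i) := by
  obtain ⟨hz_gt, hz_lt⟩ := levelMass_eq_of_medianOutcomeOn hz hP hk hkQ hgt hge
  have hterm (S : Finset ι) : (cutWeight k D θ #(S ∩ Q) #(S \ Q) : ℝ) * levelMass P 1 S ≤
      (D * #(S \ Q) - θ : ℝ) * levelMass P z S := by
    rcases lt_trichotomy (#(S ∩ Q)) k with h | h | h
    · simp [cutWeight, hz_lt S h, h.not_gt, h.ne]
    · simp only [cutWeight, h, lt_irrefl, if_false, if_true]
      push_cast
      calc _ ≤ min (D * #(S \ Q) - θ : ℝ) 0 * levelMass P z S :=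
            mul_le_mul_of_nonpos_left (levelMass_mono hz.1.apply_le_one S) (min_le_right _ _)
        _ ≤ _ := mul_le_mul_of_nonneg_right (min_le_left _ _) (levelMass_nonneg P z S)
    · simp [cutWeight, h, hz_gt S h]
  calc _ ≤ θ + ∑ S, (D * #(S \ Q) - θ : ℝ) * levelMass P z S := by
        gcongr θ + ?_
        exact sum_le_sum fun S _ => hterm S
    _ = D * ∑ i ∈ Qᶜ, util z (P i) := by
        simp only [sum_util_eq_sum_card_mul_levelMass (fun i => (hP i).1) hz.1.1, sub_mul,
          sum_sub_distrib, ← mul_sum, sum_levelMass P hz.1, mul_assoc, sdiff_eq_inter_compl]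
        ring

end Slackness

section Relations

/-- The linear relations from which the bound is derived. Here `x S` stands for the mass approved
by exactly the voters in `S`, `U` for the total utility of a budget, `W Q` for the total utility
that the outcome chosen by the triple `Q` has for the other voters, and `high Q` for whether the
mass approved by a majority of `Q` is at least `1`. -/
structure Relations (x : Finset (Fin 6) → ℝ) (U : ℝ) (W : Finset (Fin 6) → ℝ)
    (high : Finset (Fin 6) → Bool) : Prop where
  nonneg : ∀ S, 0 ≤ x S
  sum_mem_eq_one : ∀ i, ∑ S with i ∈ S, x S = 1
  utility_le : ∀ θ : ℕ, U ≤ θ + ∑ S, ((#S - θ : ℕ) : ℝ) * x S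
  cut_le : ∀ Q, #Q = 3 → ∀ D θ : ℕ,
    θ + ∑ S, (cutWeight (if high Q then 2 else 1) D θ #(S ∩ Q) #(S \ Q) : ℝ) * x S ≤ D * W Q

theorem relations_of_medianOutcomeOn {m : ℕ} {P : Fin 6 → Fin m → ℝ} (hP : ∀ i, IsBudget (P i))
    {p : Finset (Fin 6) → Fin m → ℝ} (hp : ∀ Q ∈ univ.powersetCard 3, MedianOutcomeOn P Q (p Q))
    {v : Fin m → ℝ} (hv : IsBudget v) :
    Relations (levelMass P 1) (∑ i, util v (P i)) (fun Q => ∑ i ∈ Qᶜ, util (p Q) (P i))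
      fun Q => 1 ≤ ∑ S with 2 ≤ #(S ∩ Q), levelMass P 1 S where
  nonneg := levelMass_nonneg P 1
  sum_mem_eq_one i := sum_levelMass_one_mem (hP i)
  utility_le := sum_util_le (fun i => (hP i).1) hv
  cut_le Q hQ D θ := by
    have hz := hp Q (mem_powersetCard_univ.2 hQ)
    obtain ⟨i, hi⟩ : Q.Nonempty := card_pos.1 (by lia)
    have hone := sum_levelMass_one_mem (hP i)
    by_cases hhigh : 1 ≤ ∑ S with 2 ≤ #(S ∩ Q), levelMass P 1 S
    · simp only [hhigh, decide_true, if_true]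
      refine add_sum_cutWeight_mul_le hz hP one_le_two (by lia) (hone ▸ ?_) hhigh D θ
      refine sum_le_sum_of_subset_of_nonneg (fun S hS => ?_) fun S _ _ => levelMass_nonneg P 1 S
      have hQS : S ∩ Q = Q := eq_of_subset_of_card_le inter_subset_right
        (hQ ▸ (mem_filter.1 hS).2)
      simpa using inter_eq_right.1 hQS hi
    · simp only [hhigh, decide_false, Bool.false_eq_true, if_false]
      refine add_sum_cutWeight_mul_le hz hP le_rfl (by lia) (not_le.1 hhigh).le ?_ D θ
      refine hone.symm.trans_le ?_
      refine sum_le_sum_of_subset_of_nonneg (fun S hS => ?_) fun S _ _ => levelMass_nonneg P 1 S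
      simpa using ⟨i, mem_inter.2 ⟨(mem_filter.1 hS).2, hi⟩⟩

namespace Relations

variable {x : Finset (Fin 6) → ℝ} {U : ℝ} {W : Finset (Fin 6) → ℝ} {high : Finset (Fin 6) → Bool}

theorem map (h : Relations x U W high) (σ : Equiv.Perm (Fin 6)) :
    Relations (fun S => x (S.map σ.toEmbedding)) U (fun Q => W (Q.map σ.toEmbedding))
      fun Q => high (Q.map σ.toEmbedding) where
  nonneg S := h.nonneg _
  sum_mem_eq_one i := by
    rw [← h.sum_mem_eq_one (σ i), sum_filter, sum_filter,
      ← Equiv.sum_comp σ.finsetCongr fun S => if σ i ∈ S then x S else 0]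
    simp
  utility_le θ := by
    refine (h.utility_le θ).trans_eq ?_
    rw [← Equiv.sum_comp σ.finsetCongr]
    simp
  cut_le Q hQ D θ := by
    refine le_of_eq_of_le (Eq.symm ?_) (h.cut_le (Q.map σ.toEmbedding) (by rwa [card_map]) D θ)
    rw [← Equiv.sum_comp σ.finsetCongr]
    simp only [Equiv.finsetCongr_apply, ← Finset.map_sdiff, ← map_inter, card_map]

theorem sum_card_inter_mul (h : Relations x U W high) (Q : Finset (Fin 6)) :
    ∑ S, (#(S ∩ Q) : ℝ) * x S = #Q := by
  have hcard (S : Finset (Fin 6)) : (#(S ∩ Q) : ℝ) * x S = ∑ i ∈ Q, if i ∈ S then x S else 0 := by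
    rw [← sum_filter, sum_const, nsmul_eq_mul, filter_mem_eq_inter, inter_comm]
  simp only [hcard]
  rw [sum_comm]
  simp [← sum_filter, h.sum_mem_eq_one]

theorem add_sum_mul_le (h : Relations x U W high) {Q : Finset (Fin 6)} (hQ : #Q = 3)
    {D θ c : ℕ} {d : ℤ} (hc : c ≤ θ - d) {w : Finset (Fin 6) → ℤ}
    (hw : ∀ S, 3 * w S ≤
      3 * cutWeight (if high Q then 2 else 1) D θ #(S ∩ Q) #(S \ Q) + d * #(S ∩ Q)) :
    c + ∑ S, (w S : ℝ) * x S ≤ D * W Q := by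
  have hterm (S : Finset (Fin 6)) : (w S : ℝ) * x S ≤
      cutWeight (if high Q then 2 else 1) D θ #(S ∩ Q) #(S \ Q) * x S +
        d / 3 * (#(S ∩ Q) * x S) := by
    have hS : (3 * w S : ℝ) ≤
        3 * cutWeight (if high Q then 2 else 1) D θ #(S ∩ Q) #(S \ Q) + d * #(S ∩ Q) :=
      mod_cast hw S
    nlinarith [h.nonneg S]
  have hc' : (c : ℝ) ≤ θ - d := mod_cast hc
  have hsum := sum_le_sum fun S (_ : S ∈ univ) => hterm S
  rw [sum_add_distrib, ← mul_sum, h.sum_card_inter_mul, hQ] at hsum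
  push_cast at hsum
  linarith [h.cut_le Q hQ D θ]

end Relations

end Relations

section Cuts

/-- A lower bound for `D` times the utility that the outcome of a triple has for the other voters,
by `const` plus a linear form in the masses (`Cut.gain` minus `Cut.loss`). -/
structure Cut where
  const : ℕ
  /-- Extra coefficient of the mass approved by two voters of the triple and all others. -/
  bonus : ℕ
  /-- `loss₁` applies to the mass approved by a single voter of the triple and no other voter;
  `loss₂` and `loss₃` to that approved by exactly two, respectively three, voters of the triple. -/
  (loss₁ loss₂ loss₃ : ℕ)

/-- The cut of a triple, given whether the mass approved by a majority of the triple is known to be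
at least `1` (`some true`), known to be at most `1` (`some false`) or unknown (`none`). In the first
two cases it is `Relations.cut_le` with `θ = 2 * D + Y`, respectively `θ = X`. The last one is
implied by each of these, since the masses weighted by the numbers of approving voters in the triple
sum to `3`. -/
def cut (D X Y : ℕ) : Option Bool → Cut
  | some false => ⟨X, D, X, X, X⟩
  | some true => ⟨2 * D + Y, Y, 0, 2 * D + Y, 2 * D + Y⟩
  | none => ⟨X, Y, X, X + (2 * D + Y - X + 2) / 3, X⟩

/-- The number of voters outside `Q` approving the mass, at most two of them counted if `Q` is not
unanimous, and none if `Q` has no majority. -/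
def outsiders (Q S : Finset (Fin 6)) : ℕ :=
  if #(S ∩ Q) = 3 then #(S \ Q) else if #(S ∩ Q) = 2 then min #(S \ Q) 2 else 0

/-- Indicator of approval by all voters outside `Q` and exactly two in `Q`. -/
def pairAndOutsiders (Q S : Finset (Fin 6)) : ℕ :=
  if #(S ∩ Q) = 2 ∧ #(S \ Q) = 3 then 1 else 0

/-- Indicator of approval by a single voter, who is in `Q`. -/
def loner (Q S : Finset (Fin 6)) : ℕ := if #(S ∩ Q) = 1 ∧ #(S \ Q) = 0 then 1 else 0

/-- Indicator of approval by exactly `n` voters of `Q`. -/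
def insiders (n : ℕ) (Q S : Finset (Fin 6)) : ℕ := if #(S ∩ Q) = n then 1 else 0

namespace Cut

/-- The positive part of the linear form of a cut for the triple `Q`. -/
def gain (D : ℕ) (c : Cut) (Q : Finset (Fin 6)) : Finset (Fin 6) → ℕ :=
  D • outsiders Q + c.bonus • pairAndOutsiders Q

/-- The negative part of the linear form of a cut for the triple `Q`. -/
def loss (c : Cut) (Q : Finset (Fin 6)) : Finset (Fin 6) → ℕ :=
  c.loss₁ • loner Q + c.loss₂ • insiders 2 Q + c.loss₃ • insiders 3 Q

end Cut

variable {x : Finset (Fin 6) → ℝ} {U : ℝ} {W : Finset (Fin 6) → ℝ} {high : Finset (Fin 6) → Bool}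
  {Q : Finset (Fin 6)} {D X Y : ℕ}

theorem card_sdiff_le_three (hQ : #Q = 3) (S : Finset (Fin 6)) : #(S \ Q) ≤ 3 := by
  have h := card_le_card (sdiff_subset_sdiff (subset_univ S) (subset_refl Q))
  rwa [card_univ_sdiff, hQ] at h

theorem card_inter_le_three (hQ : #Q = 3) (S : Finset (Fin 6)) : #(S ∩ Q) ≤ 3 :=
  hQ ▸ card_le_card inter_subset_right

theorem gain_cut_le (hQ : #Q = 3) (hY : Y ≤ D) (status : Option Bool)
    (S : Finset (Fin 6)) : (cut D X Y status).gain D Q S ≤ 4 * D := by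
  have := card_sdiff_le_three hQ S
  have := card_inter_le_three hQ S
  simp only [Cut.gain, outsiders, pairAndOutsiders, Pi.add_apply, Pi.smul_apply, smul_eq_mul]
  generalize #(S ∩ Q) = a at *
  generalize #(S \ Q) = e at *
  rcases status with _ | _ | _ <;> interval_cases a <;> interval_cases e <;>
    simp only [cut] <;> lia

theorem loss_cut_le (hX : X ≤ D) (hY : Y ≤ D) (status : Option Bool)
    (S : Finset (Fin 6)) : (cut D X Y status).loss Q S ≤ 3 * D := by
  simp only [Cut.loss, loner, insiders, Pi.add_apply, Pi.smul_apply, smul_eq_mul]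
  rcases status with _ | _ | _ <;> simp only [cut] <;> split_ifs <;> lia

theorem three_mul_gain_sub_loss_le (hQ : #Q = 3) (hX : X ≤ D) (hY : Y ≤ D) {status : Option Bool}
    {b : Bool} (hb : ∀ b', status = some b' → b = b') (S : Finset (Fin 6)) :
    3 * (((cut D X Y status).gain D Q S : ℤ) - (cut D X Y status).loss Q S) ≤
      3 * cutWeight (if b then 2 else 1) D (if b then 2 * D + Y else X) #(S ∩ Q) #(S \ Q) +
        ((if b then 2 * D + Y else X) - (cut D X Y status).const : ℤ) * #(S ∩ Q) := by
  have := card_sdiff_le_three hQ S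
  have := card_inter_le_three hQ S
  simp only [Cut.gain, Cut.loss, outsiders, pairAndOutsiders, loner, insiders, cutWeight,
    Pi.add_apply, Pi.smul_apply, smul_eq_mul]
  generalize #(S ∩ Q) = a at *
  generalize #(S \ Q) = e at *
  obtain rfl | rfl : status = none ∨ status = some b := by
    cases status with
    | none => exact .inl rfl
    | some b' => exact .inr (congrArg some (hb b' rfl).symm)
  all_goals cases b <;> interval_cases a <;> interval_cases e <;> simp only [cut] <;> lia

theorem Relations.const_add_sum_gain_mul_le (h : Relations x U W high) (hQ : #Q = 3)
    (hX : X ≤ D) (hY : Y ≤ D) {status : Option Bool}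
    (hstatus : ∀ b, status = some b → high Q = b) :
    (cut D X Y status).const + ∑ S, ((cut D X Y status).gain D Q S : ℝ) * x S ≤
      D * W Q + ∑ S, ((cut D X Y status).loss Q S : ℝ) * x S := by
  have hcut := h.add_sum_mul_le hQ (c := (cut D X Y status).const)
    (w := fun S => (cut D X Y status).gain D Q S - (cut D X Y status).loss Q S) ?_
    fun S => three_mul_gain_sub_loss_le hQ hX hY hstatus S
  · push_cast [sub_mul, sum_sub_distrib] at hcut
    linarith
  · lia

end Cuts

section Packing

/-- The base of the Kronecker packing `pack`. -/
def packBase : ℕ := 65536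

/-- All sets of voters. -/
def patterns : List (Finset (Fin 6)) :=
  (List.range 64).map fun n => ({i : Fin 6 | n.testBit i} : Finset (Fin 6))

/-- Kronecker packing: the values of a function on `patterns`, as digits in base `packBase` of a
single number, so that linear combinations of functions can be computed on numbers. -/
def pack : (Finset (Fin 6) → ℕ) →ₗ[ℕ] ℕ where
  toFun f := Nat.ofDigits packBase (patterns.map f)
  map_add' f g := by
    induction patterns with
    | nil => rfl
    | cons S l ih => simp only [List.map_cons, Nat.ofDigits_cons, Pi.add_apply, ih]; ring
  map_smul' c f := by
    induction patterns with
    | nil => rfl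
    | cons S l ih =>
      simp only [List.map_cons, Nat.ofDigits_cons, Pi.smul_apply, smul_eq_mul, RingHom.id_apply,
        ih]
      ring

/-- Whether each of the `n` lowest digits of the first number is at most that of the second one. -/
def digitsLE : ℕ → ℕ → ℕ → Bool
  | 0, _, _ => true
  | n + 1, a, b =>
    decide (a % packBase ≤ b % packBase) && digitsLE n (a / packBase) (b / packBase)

theorem ofDigits_cons_mod {d : ℕ} (hd : d < packBase) (l : List ℕ) :
    Nat.ofDigits packBase (d :: l) % packBase = d := by
  rw [Nat.ofDigits_cons, Nat.add_mul_mod_self_left, Nat.mod_eq_of_lt hd]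

theorem ofDigits_cons_div {d : ℕ} (hd : d < packBase) (l : List ℕ) :
    Nat.ofDigits packBase (d :: l) / packBase = Nat.ofDigits packBase l := by
  rw [Nat.ofDigits_cons, Nat.add_mul_div_left _ _ (by decide), Nat.div_eq_of_lt hd, zero_add]

theorem le_of_digitsLE {α : Type*} {f g : α → ℕ} (hf : ∀ a, f a < packBase)
    (hg : ∀ a, g a < packBase) {l : List α}
    (h : digitsLE l.length (Nat.ofDigits packBase (l.map f)) (Nat.ofDigits packBase (l.map g))) :
    ∀ a ∈ l, f a ≤ g a := by
  induction l with
  | nil => simp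
  | cons a l ih =>
    simp only [List.length_cons, List.map_cons, digitsLE, ofDigits_cons_mod (hf a),
      ofDigits_cons_mod (hg a), ofDigits_cons_div (hf a), ofDigits_cons_div (hg a),
      Bool.and_eq_true, decide_eq_true_eq] at h
    exact List.forall_mem_cons.2 ⟨h.1, ih h.2⟩

theorem le_of_digitsLE_pack {f g : Finset (Fin 6) → ℕ} (hf : ∀ S, f S < packBase)
    (hg : ∀ S, g S < packBase) (h : digitsLE 64 (pack f) (pack g)) : f ≤ g :=
  fun S => le_of_digitsLE (l := patterns) hf hg h S ((by decide +kernel : ∀ S, S ∈ patterns) S)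

end Packing

section Triples

/-- The triples of voters, in lexicographic order. -/
def triples : List (Finset (Fin 6)) :=
  [{0, 1, 2}, {0, 1, 3}, {0, 1, 4}, {0, 1, 5}, {0, 2, 3}, {0, 2, 4}, {0, 2, 5}, {0, 3, 4},
    {0, 3, 5}, {0, 4, 5}, {1, 2, 3}, {1, 2, 4}, {1, 2, 5}, {1, 3, 4}, {1, 3, 5}, {1, 4, 5},
    {2, 3, 4}, {2, 3, 5}, {2, 4, 5}, {3, 4, 5}]

theorem card_of_mem_triples : ∀ Q ∈ triples, #Q = 3 := by decide +kernel

theorem sum_map_triples {M : Type*} [AddCommMonoid M] (f : Finset (Fin 6) → M) :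
    (triples.map f).sum = ∑ Q ∈ univ.powersetCard 3, f Q := by
  have htriples : triples.toFinset = univ.powersetCard 3 := by decide +kernel
  rw [← htriples, List.sum_toFinset f (by decide +kernel)]

/-- The number whose binary digits indicate the members of `Q`. -/
def bitCode (Q : Finset (Fin 6)) : ℕ := ∑ i ∈ Q, 2 ^ (i : ℕ)

theorem bitCode_injective : Function.Injective bitCode := by
  intro Q R h
  have hsum (S : Finset (Fin 6)) : bitCode S = ∑ k ∈ S.map Fin.valEmbedding, 2 ^ k := by
    simp [bitCode]
  rw [hsum, hsum] at h
  exact map_injective _ (geomSum_injective le_rfl h)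

theorem bitCode_map (σ : Equiv.Perm (Fin 6)) (Q : Finset (Fin 6)) :
    bitCode (Q.map σ.toEmbedding) = ∑ i ∈ Q, 2 ^ (σ i : ℕ) :=
  sum_map ..

/-- The decisions `s`, keyed by bit codes, agree with `high`. -/
def Consistent (high : Finset (Fin 6) → Bool) (s : List (ℕ × Bool)) : Prop :=
  ∀ Q b, s.lookup (bitCode Q) = some b → high Q = b

theorem Consistent.cons {high : Finset (Fin 6) → Bool} {s : List (ℕ × Bool)}
    (hs : Consistent high s) (Q : Finset (Fin 6)) : Consistent high ((bitCode Q, high Q) :: s) := by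
  intro R b hR
  rw [List.lookup_cons] at hR
  by_cases hRQ : R = Q
  · simpa [hRQ] using hR
  · have : (bitCode R == bitCode Q) = false := by simpa using bitCode_injective.ne hRQ
    rw [this] at hR
    exact hs R b hR

end Triples

section Certificates

/-- The cuts for the listed triples encoded by `c`: two base-`20` digits per triple, capped at `D`
so that every number encodes valid cuts. The decisions made so far are given by `s`, whose keys
are bit codes. -/
def cutsOf (D : ℕ) (s : List (ℕ × Bool)) :
    List (Finset (Fin 6)) → ℕ → List (Finset (Fin 6) × Cut)
  | [], _ => []
  | Q :: l, c =>
    (Q, cut D (min (c % 20) D) (min (c / 20 % 20) D) (s.lookup (bitCode Q))) ::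
      cutsOf D s l (c / 400)

/-- Number of voters in `S` beyond `θ`. -/
def excess (θ : ℕ) (S : Finset (Fin 6)) : ℕ := #S - θ

/-- Indicator of approval by voter `i`. -/
def approval (i : Fin 6) (S : Finset (Fin 6)) : ℕ := if i ∈ S then 1 else 0

/-- The multiplier of voter `i` encoded by `c`, two decimal digits per voter. -/
def multiplier (c : ℕ) (i : Fin 6) : ℕ := c / 100 ^ (i : ℕ) % 100

/-- A linear-programming certificate: `18 * D` times the total utility of a budget is bounded by
means of `Relations.utility_le`, taken `g₂`, `g₃` and `18 * D - g₂ - g₃` times for the thresholds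
`2`, `3` and `4`, of the normalization of each voter's budget, with the multipliers encoded by
`multipliers`, and of the cuts encoded by `cuts`. -/
structure Certificate where
  (D g₂ g₃ multipliers cuts : ℕ)

theorem map_fst_cutsOf (D : ℕ) (s : List (ℕ × Bool)) (l : List (Finset (Fin 6))) (c : ℕ) :
    (cutsOf D s l c).map Prod.fst = l := by
  induction l generalizing c with
  | nil => rfl
  | cons Q l ih => simp [cutsOf, ih]

theorem exists_eq_cut_of_mem_cutsOf {D : ℕ} {s : List (ℕ × Bool)} {l : List (Finset (Fin 6))}
    {c : ℕ} {a : Finset (Fin 6) × Cut} (ha : a ∈ cutsOf D s l c) :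
    ∃ X ≤ D, ∃ Y ≤ D, a.2 = cut D X Y (s.lookup (bitCode a.1)) := by
  induction l generalizing c with
  | nil => simp [cutsOf] at ha
  | cons Q l ih =>
    obtain rfl | ha := List.mem_cons.1 ha
    · exact ⟨_, min_le_right _ _, _, min_le_right _ _, rfl⟩
    · exact ih ha

theorem sum_map_const_add_sum_gain_mul_le {x W : Finset (Fin 6) → ℝ} {D : ℕ}
    {l : List (Finset (Fin 6) × Cut)}
    (hl : ∀ a ∈ l, a.2.const + ∑ S, (a.2.gain D a.1 S : ℝ) * x S ≤
      D * W a.1 + ∑ S, (a.2.loss a.1 S : ℝ) * x S) :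
    (l.map fun a => a.2.const).sum + ∑ S, ((l.map fun a => a.2.gain D a.1).sum S : ℝ) * x S ≤
      D * ((l.map Prod.fst).map W).sum +
        ∑ S, ((l.map fun a => a.2.loss a.1).sum S : ℝ) * x S := by
  induction l with
  | nil => simp
  | cons a l ih =>
    obtain ⟨ha, hl⟩ := List.forall_mem_cons.1 hl
    simp only [List.map_cons, List.sum_cons, Pi.add_apply, Nat.cast_add, add_mul, mul_add,
      sum_add_distrib]
    linarith [ih hl]

namespace Certificate

section Definitions

variable (C : Certificate) (s : List (ℕ × Bool))

/-- How often the threshold `4` is used in a certificate. -/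
def g₄ : ℕ := 18 * C.D - C.g₂ - C.g₃

/-- The cuts used in a certificate, with their triples. -/
def cutList : List (Finset (Fin 6) × Cut) := cutsOf C.D s triples C.cuts

/-- The coefficients of the masses in the upper bound on the utility of a budget, together with
those that the cuts lose. -/
def demand : Finset (Fin 6) → ℕ :=
  C.g₂ • excess 2 + C.g₃ • excess 3 + C.g₄ • excess 4 +
    ((C.cutList s).map fun a => a.2.loss a.1).sum

/-- The coefficients of the masses available to cover `Certificate.demand`: those that the cuts
gain, together with those of the normalizations of the voters' budgets. -/
def supply : Finset (Fin 6) → ℕ :=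
  ((C.cutList s).map fun a => a.2.gain C.D a.1).sum +
    ∑ i, multiplier C.multipliers i • approval i

-- In the next two definitions, destructuring the pairs makes the arguments of `pack` literals, so
-- that the kernel evaluates each of them only once.
/-- `pack` of `Certificate.demand`. -/
def packedDemand : ℕ :=
  C.g₂ * pack (excess 2) + C.g₃ * pack (excess 3) + C.g₄ * pack (excess 4) +
    ((C.cutList s).map fun (Q, c) => c.loss₁ * pack (loner Q) +
      c.loss₂ * pack (insiders 2 Q) + c.loss₃ * pack (insiders 3 Q)).sum

/-- `pack` of `Certificate.supply`. -/
def packedSupply : ℕ :=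
  ((C.cutList s).map fun (Q, c) => C.D * pack (outsiders Q) +
      c.bonus * pack (pairAndOutsiders Q)).sum +
    ∑ i, multiplier C.multipliers i * pack (approval i)

/-- Whether `C` proves the bound when the decisions `s` have been made. The condition on `packBase`
rules out carries between the digits of the packed functions. -/
def check : Bool :=
  decide (0 < C.D) && decide (C.g₂ + C.g₃ ≤ 18 * C.D) &&
    decide (132 * C.D + ∑ i, multiplier C.multipliers i < packBase) &&
    decide (2 * C.g₂ + 3 * C.g₃ + 4 * C.g₄ + ∑ i, multiplier C.multipliers i ≤
      48 * C.D + ((C.cutList s).map fun a => a.2.const).sum) &&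
    digitsLE 64 (C.packedDemand s) (C.packedSupply s)

end Definitions

variable {C : Certificate} {s : List (ℕ × Bool)}

theorem pack_demand : pack (C.demand s) = C.packedDemand s := by
  simp only [demand, packedDemand, Cut.loss, map_add, map_nsmul, map_list_sum, List.map_map,
    Function.comp_def, smul_eq_mul]

theorem pack_supply : pack (C.supply s) = C.packedSupply s := by
  simp only [supply, packedSupply, Cut.gain, map_add, map_nsmul, map_list_sum, List.map_map,
    Function.comp_def, smul_eq_mul, map_sum]

theorem card_of_mem_cutList {a : Finset (Fin 6) × Cut} (ha : a ∈ C.cutList s) : #a.1 = 3 := by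
  refine card_of_mem_triples _ ?_
  rw [← map_fst_cutsOf C.D s triples C.cuts]
  exact List.mem_map_of_mem ha

theorem length_cutList : (C.cutList s).length = 20 := by
  rw [← List.length_map (f := Prod.fst), cutList, map_fst_cutsOf]
  rfl

theorem sum_map_cutList_le {f : Finset (Fin 6) × Cut → Finset (Fin 6) → ℕ} {S : Finset (Fin 6)}
    {n : ℕ} (hf : ∀ a ∈ C.cutList s, f a S ≤ n) : ((C.cutList s).map f).sum S ≤ 20 * n := by
  rw [Pi.list_sum_apply, List.map_map]
  refine (List.sum_le_card_nsmul _ n ?_).trans_eq ?_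
  · exact List.forall_mem_map.2 hf
  · rw [List.length_map, length_cutList, smul_eq_mul]

theorem demand_le (hg : C.g₂ + C.g₃ ≤ 18 * C.D) (S : Finset (Fin 6)) :
    C.demand s S ≤ 132 * C.D := by
  have hloss : ((C.cutList s).map fun a => a.2.loss a.1).sum S ≤ 20 * (3 * C.D) :=
    sum_map_cutList_le fun a ha => by
      obtain ⟨X, hX, Y, hY, hcut⟩ := exists_eq_cut_of_mem_cutsOf ha
      exact hcut ▸ loss_cut_le hX hY _ S
  have hS : #S ≤ 6 := S.card_le_univ
  have h₂ : C.g₂ * (#S - 2) ≤ C.g₂ * 4 := by gcongr; lia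
  have h₃ : C.g₃ * (#S - 3) ≤ C.g₃ * 4 := by gcongr; lia
  have h₄ : C.g₄ * (#S - 4) ≤ C.g₄ * 4 := by gcongr; lia
  simp only [demand, excess, Pi.add_apply, Pi.smul_apply, smul_eq_mul]
  unfold g₄ at *
  lia

theorem supply_le (S : Finset (Fin 6)) :
    C.supply s S ≤ 80 * C.D + ∑ i, multiplier C.multipliers i := by
  have hgain : ((C.cutList s).map fun a => a.2.gain C.D a.1).sum S ≤ 20 * (4 * C.D) :=
    sum_map_cutList_le fun a ha => by
      obtain ⟨X, -, Y, hY, hcut⟩ := exists_eq_cut_of_mem_cutsOf ha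
      exact hcut ▸ gain_cut_le (card_of_mem_cutList ha) hY _ S
  have happroval : ∑ i, multiplier C.multipliers i * approval i S ≤
      ∑ i, multiplier C.multipliers i :=
    sum_le_sum fun i _ => mul_le_of_le_one_right' (by unfold approval; split_ifs <;> simp)
  simp only [supply, Pi.add_apply, Finset.sum_apply, Pi.smul_apply, smul_eq_mul]
  lia

theorem demand_le_supply (hC : C.check s) : C.demand s ≤ C.supply s := by
  simp only [check, Bool.and_eq_true, decide_eq_true_eq] at hC
  obtain ⟨⟨⟨⟨-, hg⟩, hbase⟩, -⟩, hdigits⟩ := hC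
  refine le_of_digitsLE_pack (fun S => (demand_le hg S).trans_lt (by lia))
    (fun S => (supply_le S).trans_lt (by lia)) ?_
  rwa [pack_demand, pack_supply]

variable {x : Finset (Fin 6) → ℝ} {U : ℝ} {W : Finset (Fin 6) → ℝ} {high : Finset (Fin 6) → Bool}

theorem sum_supply_mul (h : Relations x U W high) :
    ∑ S, (C.supply s S : ℝ) * x S =
      ∑ S, (((C.cutList s).map fun a => a.2.gain C.D a.1).sum S : ℝ) * x S +
        ∑ i, (multiplier C.multipliers i : ℝ) := by
  have hvoter (i : Fin 6) : ∑ S, (approval i S : ℝ) * x S = 1 := by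
    rw [← h.sum_mem_eq_one i, sum_filter]
    simp [approval]
  simp only [supply, Pi.add_apply, Nat.cast_add, add_mul, sum_add_distrib, Finset.sum_apply,
    Pi.smul_apply, smul_eq_mul, Nat.cast_sum, Nat.cast_mul, sum_mul, mul_assoc]
  rw [sum_comm]
  simp only [← mul_sum, hvoter, mul_one]

theorem mul_utility_add_le (h : Relations x U W high) (hg : C.g₂ + C.g₃ ≤ 18 * C.D) :
    18 * C.D * U + ∑ S, (((C.cutList s).map fun a => a.2.loss a.1).sum S : ℝ) * x S ≤
      2 * C.g₂ + 3 * C.g₃ + 4 * C.g₄ + ∑ S, (C.demand s S : ℝ) * x S := by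
  have h₂ := mul_le_mul_of_nonneg_left (h.utility_le 2) (Nat.cast_nonneg C.g₂)
  have h₃ := mul_le_mul_of_nonneg_left (h.utility_le 3) (Nat.cast_nonneg C.g₃)
  have h₄ := mul_le_mul_of_nonneg_left (h.utility_le 4) (Nat.cast_nonneg C.g₄)
  have hweights : (C.g₂ + C.g₃ + C.g₄ : ℝ) = 18 * C.D := by
    unfold g₄
    exact_mod_cast (by lia : C.g₂ + C.g₃ + (18 * C.D - C.g₂ - C.g₃) = 18 * C.D)
  simp only [demand, excess, Pi.add_apply, Pi.smul_apply, smul_eq_mul, Nat.cast_add, Nat.cast_mul,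
    add_mul, sum_add_distrib, mul_assoc, ← mul_sum]
  rw [← mul_assoc, ← hweights]
  push_cast at h₂ h₃ h₄
  linarith

theorem check_sound (hC : C.check s) (h : Relations x U W high) (hs : Consistent high s) :
    18 * U ≤ 48 + ∑ Q ∈ univ.powersetCard 3, W Q := by
  have hle : ∑ S, (C.demand s S : ℝ) * x S ≤ ∑ S, (C.supply s S : ℝ) * x S :=
    sum_le_sum fun S _ =>
      mul_le_mul_of_nonneg_right (mod_cast demand_le_supply hC S) (h.nonneg S)
  simp only [check, Bool.and_eq_true, decide_eq_true_eq] at hC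
  obtain ⟨⟨⟨⟨hD, hg⟩, -⟩, hconst⟩, -⟩ := hC
  have hcuts := sum_map_const_add_sum_gain_mul_le (x := x) (W := W) (D := C.D) (l := C.cutList s)
    fun a ha => by
    obtain ⟨X, hX, Y, hY, hcut⟩ := exists_eq_cut_of_mem_cutsOf ha
    rw [hcut]
    exact h.const_add_sum_gain_mul_le (card_of_mem_cutList ha) hX hY (hs a.1)
  rw [cutList, map_fst_cutsOf, sum_map_triples, ← cutList] at hcuts
  rw [sum_supply_mul h] at hle
  have hconst' := (Nat.cast_le (α := ℝ)).2 hconst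
  simp only [Nat.cast_add, Nat.cast_mul, Nat.cast_sum, Nat.cast_ofNat] at hconst'
  have hutility := mul_utility_add_le (s := s) h hg
  refine le_of_mul_le_mul_left ?_ (Nat.cast_pos (α := ℝ).2 hD)
  linarith

end Certificate

end Certificates

section Trees

/-- A case distinction over which triples are high, in the order of `triples`. A case is settled by
a certificate, or by a relabelling of the voters that would make the list of decisions
lexicographically smaller. -/
inductive Tree
  | leaf (C : Certificate)
  | relabel (σ : ℕ)
  | split (low high : Tree)

/-- The map of voters encoded by `c`, one decimal digit per voter. -/
def relabelling (c : ℕ) (i : Fin 6) : Fin 6 := Fin.ofNat 6 (c / 10 ^ (i : ℕ) % 10)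

/-- Whether the decisions `s` imply that relabelling the voters by `σ` makes the list of decisions
on `l` lexicographically smaller. -/
def precedes (s : List (ℕ × Bool)) (σ : Fin 6 → Fin 6) : List (Finset (Fin 6)) → Bool
  | [] => false
  | Q :: l =>
    match s.lookup (∑ i ∈ Q, 2 ^ (σ i : ℕ)), s.lookup (bitCode Q) with
    | some b, some b' => if b = b' then precedes s σ l else !b && b'
    | _, _ => false

/-- Whether the tree settles all cases in which the decisions `s` have been made and the triples in
`l` are undecided. -/
def Tree.check : Tree → List (ℕ × Bool) → List (Finset (Fin 6)) → Bool
  | leaf C, s, _ => C.check s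
  | relabel c, s, _ =>
    decide (Function.Injective (relabelling c)) && precedes s (relabelling c) triples
  | split low high, s, Q :: l =>
    low.check ((bitCode Q, false) :: s) l && high.check ((bitCode Q, true) :: s) l
  | split _ _, _, [] => false

theorem lt_of_precedes {high : Finset (Fin 6) → Bool} {s : List (ℕ × Bool)}
    (hs : Consistent high s) {σ : Equiv.Perm (Fin 6)} {l : List (Finset (Fin 6))}
    (h : precedes s σ l) : l.map (fun Q => high (Q.map σ.toEmbedding)) < l.map high := by
  induction l with
  | nil => simp [precedes] at h
  | cons Q l ih =>
    rw [precedes, ← bitCode_map] at h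
    rw [List.map_cons, List.map_cons, List.cons_lt_cons_iff]
    split at h
    next b b' hb hb' =>
      rw [hs _ b hb, hs _ b' hb']
      split_ifs at h with hbb'
      · exact .inr ⟨hbb', ih h⟩
      · exact .inl (by revert h; cases b <;> cases b' <;> simp)
    next => simp at h

theorem Tree.check_sound {x : Finset (Fin 6) → ℝ} {U : ℝ} {W : Finset (Fin 6) → ℝ}
    {high : Finset (Fin 6) → Bool} (h : Relations x U W high)
    (hmin : ∀ σ : Equiv.Perm (Fin 6),
      triples.map high ≤ triples.map fun Q => high (Q.map σ.toEmbedding))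
    {t : Tree} {s : List (ℕ × Bool)} {l : List (Finset (Fin 6))} (hs : Consistent high s)
    (ht : t.check s l) : 18 * U ≤ 48 + ∑ Q ∈ univ.powersetCard 3, W Q := by
  induction t generalizing s l with
  | leaf C => exact C.check_sound ht h hs
  | relabel c =>
    simp only [Tree.check, Bool.and_eq_true, decide_eq_true_eq] at ht
    obtain ⟨hinjective, hprecedes⟩ := ht
    let σ := Equiv.ofBijective _ (Finite.injective_iff_bijective.1 hinjective)
    exact absurd (hmin σ) (lt_of_precedes hs (σ := σ) hprecedes).not_ge
  | split low high' ihlow ihhigh =>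
    cases l with
    | nil => simp [Tree.check] at ht
    | cons Q l =>
      simp only [Tree.check, Bool.and_eq_true] at ht
      have hQ := hs.cons Q
      cases hb : high Q <;> rw [hb] at hQ
      · exact ihlow hQ ht.1
      · exact ihhigh hQ ht.2

theorem Relations.mul_utility_le_of_check {x : Finset (Fin 6) → ℝ} {U : ℝ} {W : Finset (Fin 6) → ℝ}
    {high : Finset (Fin 6) → Bool} (h : Relations x U W high) {t : Tree}
    (ht : t.check [] triples) : 18 * U ≤ 48 + ∑ Q ∈ univ.powersetCard 3, W Q := by
  obtain ⟨σ, hσ⟩ := Finite.exists_min fun σ : Equiv.Perm (Fin 6) =>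
    triples.map fun Q => high (Q.map σ.toEmbedding)
  have hsum : ∑ Q ∈ univ.powersetCard 3, W (Q.map σ.toEmbedding) =
      ∑ Q ∈ univ.powersetCard 3, W Q :=
    sum_equiv σ.finsetCongr (by simp) (by simp)
  rw [← hsum]
  refine Tree.check_sound (h.map σ) (fun τ => ?_) (by simp [Consistent]) ht
  simp only [map_map]
  exact hσ (τ.trans σ)

end Trees

section Data

def subtree1 : Tree :=
  .split (.split (.split (.split (.split (.split (.relabel 543201) (.split (.split
    (.leaf ⟨1, 9, 9, 30300000101, 549755813888000000000000000000000000000000000160000⟩)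
    (.leaf ⟨3, 23, 31, 130906060001, 1736070449991568588800000000000000000000000000000000⟩))
    (.leaf ⟨6, 44, 64, 212812130001, 1267600541742929018880000005242880004096000000000000⟩)))
    (.split (.split (.split (.relabel 543120)
    (.leaf ⟨2, 14, 22, 80405020001, 1157308144114309529600000005242880000000000000000000⟩))
    (.leaf ⟨2, 11, 25, 50505020001, 55044481254216119091200005242880000000000000000000⟩)) (.split
    (.split (.relabel 543120)
    (.leaf ⟨3, 14, 40, 141009040400, 1731741123021786179646301153525760000000000000000000⟩)) (.split
    (.leaf ⟨2, 11, 25, 60805010300, 57724377638162884512972805242880000000000000000000⟩)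
    (.leaf ⟨3, 13, 41, 141109060400, 1731947280163503970713725834362880000000000000000000⟩)))))
    (.split (.relabel 453210) (.split (.split (.relabel 543120)
    (.leaf ⟨7, 36, 90, 152319031000, 2396935374327926226944125834362880000000000000000000⟩)) (.split
    (.relabel 543120) (.split (.relabel 453210)
    (.leaf ⟨3, 11, 43, 131409050500, 1735926146456345588564838333808640000000000000000000⟩))))))
    (.split (.split (.relabel 542310) (.split (.split (.split (.relabel 543120)
    (.leaf ⟨2, 10, 26, 100205050404, 27563382118916974853488860201615364096025664000000⟩))
    (.leaf ⟨2, 9, 27, 60503040301, 1101030328211865613757359073526415360000000000000000⟩)) (.split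
    (.split (.relabel 543120)
    (.leaf ⟨3, 12, 42, 160906051101, 1155940627021345444342089661808640000000000000000000⟩)) (.split
    (.leaf ⟨3, 15, 39, 141406051003, 1733311387546463680090687421808640000000000000320000⟩)
    (.leaf ⟨3, 11, 43, 161208091001, 1734696059232890304426273894563840000000000000000000⟩)))))
    (.split (.split (.split (.relabel 543120)
    (.leaf ⟨3, 17, 37, 90906070302, 1102467080671728888709120015729295360010240000000000⟩)) (.split
    (.relabel 543120)
    (.leaf ⟨3, 12, 42, 101607060902, 1731936997990169905348078484849295360000000000000000⟩)))
    (.split (.split (.relabel 543120)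
    (.leaf ⟨3, 12, 42, 120907060702, 85360413425952778837074918768640000000000000000000⟩)) (.split
    (.relabel 543120)
    (.leaf ⟨3, 11, 43, 131107051100, 1735864298884387203669159014563840000000000000000000⟩))))))
    (.split (.relabel 453210) (.split (.relabel 542310) (.split (.relabel 453210) (.split (.split
    (.relabel 543120)
    (.leaf ⟨3, 8, 46, 91207071100, 1708504146008708959511878267043840000000000000000000⟩)) (.split
    (.relabel 543120)
    (.leaf ⟨3, 4, 50, 131507071101, 1736070981322080554469189238128640000000000000000000⟩)))))))
    (.split (.split (.split (.split (.split
    (.leaf ⟨2, 16, 20, 40404040000, 27556682399324569600000000000000000000000000000000⟩) (.split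
    (.split (.leaf ⟨5, 45, 45, 171705051011, 688912754278400000000000000000000000000000320800000⟩)
    (.split (.leaf ⟨2, 14, 22, 80505030502, 54975581431755048380090286080000004096000000000000⟩)
    (.leaf ⟨1, 7, 11, 40402040201, 3436424808372790928343040000000010240000000000⟩))) (.split
    (.relabel 453210)
    (.leaf ⟨3, 21, 33, 141010110600, 82679838499345600539042780282880000000000000000000⟩)))) (.split
    (.split (.split (.relabel 543120)
    (.leaf ⟨6, 38, 66, 231016150810, 165218801942528000100663327458590732288051328000000⟩))
    (.leaf ⟨2, 12, 23, 40406060300, 27556862358507959091283886080000000000000000000000⟩)) (.split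
    (.split (.relabel 543120) (.split (.relabel 543120)
    (.leaf ⟨1, 5, 13, 50403030400, 577247041007262059898905559040000000000000000000000⟩))) (.split
    (.leaf ⟨3, 16, 38, 101209060704, 86792724908900319754190848000656998400000000160000⟩)
    (.leaf ⟨3, 12, 42, 141210100901, 82676402525667190896716692848640000000000000000000⟩)))))
    (.split (.relabel 453210) (.split (.split (.relabel 543120) (.split (.relabel 453210)
    (.leaf ⟨3, 15, 39, 121209110900, 1731940416744400617522457492848640000000000000000000⟩)))
    (.split (.relabel 543120) (.split (.relabel 453210)
    (.leaf ⟨13, 48, 186, 605743394700, 5858555294349051002312217135677440000000000000000000⟩))))))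
    (.split (.split (.relabel 542310) (.split (.split (.split (.relabel 543120)
    (.leaf ⟨4, 18, 54, 160412120708, 55123328263943462280232980972830728192102400000000⟩)) (.split
    (.leaf ⟨3, 14, 40, 60708090703, 515397149281956785039605760000000051200000000⟩)
    (.leaf ⟨3, 15, 34, 90910110300, 82679838434918406710928358768640000000000000000000⟩))) (.split
    (.split (.relabel 543120) (.split (.relabel 543120)
    (.leaf ⟨2, 6, 30, 110706060800, 1128380680833369283955345331322880000000000000000000⟩)))
    (.leaf ⟨13, 63, 156, 675135365000, 5837958349184728498029744687677440000000000000000000⟩))))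
    (.split (.split
    (.leaf ⟨4, 22, 50, 90909091301, 55113364798654777015752730869760000000000000000000⟩) (.split
    (.relabel 543120)
    (.leaf ⟨6, 17, 91, 222616201902, 2886631396463234063972685583482880000020480000000000⟩)))
    (.split (.split (.relabel 543120)
    (.leaf ⟨6, 25, 78, 212217172300, 2364167505458647021828429609697280000000000000000000⟩)) (.split
    (.relabel 543120)
    (.leaf ⟨3, 12, 39, 151308091200, 1736060664832109996629158804848640000000000000000000⟩))))))
    (.split (.relabel 453210) (.split (.relabel 542310) (.split (.relabel 453210) (.split (.split
    (.relabel 543120)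
    (.leaf ⟨3, 9, 41, 120910101200, 82670071682669583752232975728640000000000000000000⟩)) (.split
    (.relabel 543120)
    (.leaf ⟨9, 17, 145, 463826273600, 5208182011676306547733954607185920000000000000000000⟩)))))))

def subtree2 : Tree :=
  .split (.split (.split (.split (.relabel 543201) (.split (.relabel 534210) (.split (.split
    (.relabel 543120) (.split (.relabel 534210)
    (.leaf ⟨1, 2, 16, 70404010101, 578621430541982059882086405255988838400000000000000⟩))) (.split
    (.leaf ⟨2, 9, 27, 60807000403, 607480191526216564893286405242880000000000000320400⟩)
    (.leaf ⟨3, 4, 50, 171015030302, 1731947305933307766846259215767963238400000000000000⟩)))))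
    (.split (.split (.relabel 453201) (.split (.relabel 543120) (.split (.relabel 453201)
    (.leaf ⟨2, 8, 28, 91009030201, 1154631537288764591177728010485760000000000000000400⟩)))) (.split
    (.relabel 534210) (.split (.relabel 543120) (.split (.relabel 543120)
    (.leaf ⟨3, 4, 50, 141316050403, 1731947305933307880931328225456947200000000000000800⟩))))))
    (.split (.split (.split (.relabel 542301) (.split (.split
    (.leaf ⟨1, 6, 12, 50301010303, 551130203444194843526430725255987200010240064160000⟩)
    (.leaf ⟨3, 8, 46, 170906050406, 1733184231603584376357519375767961600020480192000000⟩))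
    (.leaf ⟨1, 3, 15, 50502020101, 578690158179102235526430725255987200010240000000000⟩))) (.split
    (.relabel 534210) (.split (.split (.relabel 543120) (.split (.relabel 534210)
    (.leaf ⟨1, 1, 17, 70404020202, 578621430541982060217630725255988838400000000000001⟩)))
    (.leaf ⟨8, 16, 128, 432927102906, 4629177668049567380941172050598297600000000000640800⟩))))
    (.split (.split (.split (.relabel 543120)
    (.leaf ⟨3, 13, 41, 121109050604, 1736001737819506539977768970485760000020505600000000⟩)) (.split
    (.relabel 543120)
    (.leaf ⟨3, 6, 48, 141208020706, 1735864298927237823945768975767961600020480000320000⟩))) (.split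
    (.relabel 534210) (.split (.relabel 543120)
    (.leaf ⟨1, 1, 17, 50404010401, 578621438702420050124472430113587200000000000160000⟩))))))
    (.split (.split (.split (.split (.relabel 452301) (.split (.split
    (.leaf ⟨2, 14, 21, 70703030503, 604800114753536006746118553626214400000000000160000⟩)
    (.leaf ⟨3, 13, 39, 161007050505, 85428617976804809287663631767964876800000192000000⟩)) (.split
    (.relabel 452301)
    (.leaf ⟨2, 6, 30, 81005050303, 606246668371715762737171671285760004106240000000000⟩)))) (.split
    (.split (.split (.relabel 543120) (.split
    (.leaf ⟨1, 6, 12, 40303020202, 549755814317496736328502482042881638400000000000000⟩)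
    (.leaf ⟨1, 4, 14, 50304030201, 578617994546670423418863621242880000000025600000000⟩)))
    (.leaf ⟨6, 31, 77, 202827100909, 3463874683089513074812518426214409830400000000320400⟩)) (.split
    (.split (.relabel 543120) (.split (.relabel 543120)
    (.leaf ⟨1, 2, 16, 70404020202, 578621430541982059898863621255988838400000000000000⟩))) (.split
    (.leaf ⟨6, 21, 81, 193319101511, 3463737072465929818291883239014406553600000000960000⟩)
    (.leaf ⟨3, 4, 50, 151315060505, 1731947305933307766846259425456952115200025600000000⟩)))))
    (.split (.split (.split (.relabel 543120) (.split
    (.leaf ⟨3, 15, 38, 71412050208, 1731936997947214863007744015728644915200051200160000⟩)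
    (.leaf ⟨3, 8, 46, 81313070208, 1731943869894891147362304010485764915210316800000000⟩))) (.split
    (.relabel 543120) (.split
    (.leaf ⟨6, 19, 89, 223115122408, 168087891764721429354066770657280000000000000322400⟩)
    (.leaf ⟨3, 6, 48, 141411071002, 1733318259494038206990306524528640000000000064000400⟩))))
    (.split (.split (.relabel 543120)
    (.leaf ⟨3, 8, 46, 101514040605, 1731800074393197985399622876528644915200000000000800⟩)) (.split
    (.relabel 543120) (.split (.relabel 543120)
    (.leaf ⟨2, 2, 34, 100911050801, 1154631537288872099595472297014067200000000000000400⟩))))))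
    (.split (.split (.split (.relabel 254301) (.split (.split
    (.leaf ⟨3, 13, 41, 131103070907, 206158924129253468405775767961600030720128320000⟩)
    (.leaf ⟨4, 8, 64, 231306101008, 88249552110270567394836501023948808222720192000000⟩)) (.split
    (.leaf ⟨2, 7, 29, 90903050504, 1101023473487016233051095050485760004106240000160000⟩)
    (.leaf ⟨3, 3, 49, 161310080604, 636558838171380167307427855767961608212480000000000⟩)))) (.split
    (.split (.split (.relabel 543120) (.split
    (.leaf ⟨1, 5, 13, 50203030401, 549759250291333536646430830100480000000000064000000⟩)
    (.leaf ⟨1, 2, 16, 70203040202, 551133639826107223737630725255987204096025600000000⟩)))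
    (.leaf ⟨6, 22, 78, 282423161504, 3472124799875496007769784351483494400000102400000000⟩)) (.split
    (.split (.relabel 543120) (.split (.relabel 543120)
    (.leaf ⟨2, 3, 30, 140707050503, 1129755070389564120435261450511977676800000000000000⟩)))
    (.leaf ⟨3, 3, 51, 171211081001, 1736067553959706487852892280625561600000000000000001⟩))))
    (.split (.split (.split (.relabel 543120)
    (.leaf ⟨3, 9, 43, 131310080704, 1731947477670643698195496975741747200010316800000000⟩)) (.split
    (.relabel 543120)
    (.leaf ⟨3, 3, 51, 131607060903, 1736070646336006982163496975728640000020480000000000⟩))) (.split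
    (.split (.relabel 543120)
    (.leaf ⟨3, 6, 47, 131311060903, 1736070637685022114405416975728640000000051200000000⟩)) (.split
    (.relabel 543120)
    (.leaf ⟨3, 4, 47, 161611041103, 1736070646336159990373416975767961600000000000320000⟩))))))

def subtree3 : Tree :=
  .split (.split (.split (.split (.split (.split (.split (.split
    (.leaf ⟨3, 26, 28, 30303030000, 27556682399324569600000000000000000000000000000000⟩) (.split
    (.leaf ⟨3, 26, 28, 50501010400, 6710928343040000000000000000000000⟩)
    (.leaf ⟨2, 15, 21, 40403040000, 27556853768519680000000000000000000000000000000000⟩))) (.split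
    (.relabel 534210) (.split (.split (.relabel 543120)
    (.leaf ⟨9, 59, 103, 261821051900, 192414535913067047917977914572800000000000000000000⟩)) (.split
    (.leaf ⟨3, 21, 33, 60807010600, 82532091559936020132659200000000000000000000000000⟩)
    (.leaf ⟨2, 13, 23, 60606050300, 604872278794043392000083990937600000000000000000000⟩)))))
    (.split (.relabel 453210) (.split (.relabel 534210) (.split (.relabel 543120) (.split
    (.relabel 453210)
    (.leaf ⟨3, 15, 39, 80809040401, 1731936972177408000000000104857600000000000000000000⟩))))))
    (.split (.split (.relabel 542310) (.split (.relabel 534210) (.split (.split (.relabel 543120)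
    (.split (.relabel 534210) (.split (.relabel 542310)
    (.leaf ⟨3, 17, 37, 111010101101, 551133640706575532839529663692800000000000000000000⟩))))
    (.split (.split
    (.leaf ⟨2, 14, 22, 50404020701, 27487790694400013421814847897600000000000000000000⟩)
    (.leaf ⟨2, 13, 23, 60604050701, 28862180250594849901856790937600000000000000000000⟩)) (.split
    (.relabel 534210)
    (.leaf ⟨3, 13, 41, 90909110901, 1733108665025560596132785343692800000000000000000000⟩))))))
    (.split (.split (.split (.relabel 543120) (.split (.relabel 452310)
    (.leaf ⟨3, 22, 32, 70709090601, 82669530513410684354602257612800000000000000000000⟩))) (.split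
    (.relabel 543120) (.split (.relabel 452310)
    (.leaf ⟨2, 10, 26, 50606070500, 55116464927520912834602152755200000000000000000000⟩)))) (.split
    (.relabel 534210) (.split (.relabel 543120) (.split (.relabel 543120)
    (.leaf ⟨3, 13, 41, 90909091100, 1731940408194194607177854143692800000000000000000000⟩)))))))
    (.split (.relabel 453210) (.split (.relabel 542310) (.split (.relabel 453210) (.split (.split
    (.relabel 543120) (.split (.relabel 453210)
    (.leaf ⟨2, 7, 29, 60606060700, 55113020344473305293311390515200000000000000000000⟩))) (.split
    (.relabel 543120) (.split (.relabel 453210)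
    (.leaf ⟨5, 16, 73, 151518171900, 139174163273735290748928419430400000000000000000000⟩))))))))
    (.split (.relabel 534210) (.split (.relabel 453210) (.split (.relabel 542310) (.split
    (.relabel 453210) (.split (.relabel 534210) (.split (.relabel 543120) (.split (.relabel 453210)
    (.leaf ⟨8, 18, 126, 232227283100, 2974732153511954275256980471808000000000000000000000⟩)))))))))
    subtree1) (.split (.relabel 534210) (.split subtree2 (.split (.relabel 534210) (.split (.split
    (.split (.split (.split (.split
    (.leaf ⟨3, 20, 34, 60705080507, 206158430213375436783616000000000020531200160000⟩) (.split
    (.relabel 534210)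
    (.leaf ⟨2, 8, 28, 50605070106, 28862181088113465910886400000000008212505600000000⟩))) (.split
    (.split (.leaf ⟨2, 13, 21, 20505050406, 27556510171136006710886400000000000010291200160400⟩)
    (.leaf ⟨3, 15, 37, 81308110208, 1733105564060246605840777226485760004126796800000000⟩))
    (.leaf ⟨5, 22, 68, 141520170406, 2886568509424304578887680000000001638430771200000000⟩)))
    (.split (.split
    (.leaf ⟨10, 65, 98, 333610143722, 3435974008598745600072089665539276800000641600000⟩)
    (.leaf ⟨2, 5, 31, 100705050503, 604875706220895286415327237269096042496000064000000⟩)) (.split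
    (.leaf ⟨3, 13, 39, 101610061104, 1182181355922330829963290224885760000000000000480400⟩)
    (.leaf ⟨3, 6, 48, 121212110903, 1731943852779446090334627430439321600020480000000001⟩))))
    (.split (.relabel 534210) (.split (.split (.relabel 543120) (.split (.relabel 534210)
    (.leaf ⟨1, 0, 18, 70404020301, 578621430541982059898863621255988838400000000000000⟩))) (.split
    (.leaf ⟨5, 20, 59, 162618111806, 2886493459272174070208135178485761638400000000800000⟩)
    (.leaf ⟨3, 0, 53, 161116080705, 1731947305933307766896590863767964884992000000000000⟩)))))
    (.split (.split (.split (.relabel 543120) (.split (.split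
    (.leaf ⟨2, 8, 28, 20708040506, 54975598568669452435456000000000000010291200320400⟩)
    (.leaf ⟨3, 8, 46, 91411100408, 1733105564061320750334738447728640000030796800000000⟩))
    (.leaf ⟨3, 6, 48, 81214100307, 1731936997947217547362304005269096038430796800000000⟩))) (.split
    (.relabel 543120) (.split
    (.leaf ⟨6, 8, 100, 223118122209, 168087891764721429354066770657283276800000000162400⟩)
    (.leaf ⟨3, 8, 43, 131514091003, 1733314823520201541207195663741747200010240000000401⟩))))
    (.split (.relabel 534210) (.split (.relabel 543120) (.split (.relabel 543120)
    (.leaf ⟨3, 3, 48, 161317081003, 1736070474515993312937115663767961600000000000000401⟩))))))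
    (.split (.split (.split (.split (.split
    (.leaf ⟨3, 22, 32, 90806110903, 1182181158291555483983544320000000000000051200000001⟩) (.split
    (.relabel 534210)
    (.leaf ⟨2, 5, 31, 100506070700, 56356842873346459739095045255987200000000000000000⟩))) (.split
    (.leaf ⟨3, 15, 39, 90912100803, 1731936997947219849196339200000000000000076800000000⟩)
    (.leaf ⟨4, 16, 55, 131319141003, 2312011836381211148261785600000000000010291200000000⟩)))
    (.split (.split
    (.leaf ⟨3, 19, 32, 131007091201, 1154693368088929260179292160026214400000000000160000⟩)
    (.leaf ⟨5, 19, 64, 241812171802, 2832977610136145135696609290538188800010240000000001⟩)) (.split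
    (.leaf ⟨3, 12, 39, 121311091002, 1736060510213188038636339200026214400010240000160000⟩)
    (.leaf ⟨2, 2, 34, 110807070601, 1156005909643620655426437130511974400010240000000000⟩))))
    (.split (.relabel 534210) (.split (.split (.relabel 543120) (.split (.relabel 534210)
    (.leaf ⟨3, 0, 52, 221010111101, 1735864291625946180652892175767963238400000000000000⟩))) (.split
    (.leaf ⟨3, 8, 40, 141312071102, 1736060682012032886846259210511974400000000000320000⟩)
    (.leaf ⟨2, 0, 35, 120710070700, 1156005926823591845235261450511974400000000000000000⟩)))))
    (.split (.split (.split (.relabel 543120) (.split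
    (.leaf ⟨3, 15, 36, 111211111101, 1731936997949367716371496960000000000000025600000000⟩)
    (.leaf ⟨2, 2, 34, 80710070503, 1156005918192753312792576005255987200010291200000000⟩))) (.split
    (.relabel 543120) (.split
    (.leaf ⟨3, 8, 40, 121509090903, 1736060682011880261156864010485760000020480000000000⟩)
    (.leaf ⟨3, 2, 52, 141413091003, 1736070457357445957156864015741747200010240000000001⟩))))
    (.split (.relabel 534210) (.split (.relabel 543120) (.split (.relabel 543120)
    (.leaf ⟨3, 0, 50, 151316081102, 1736070465947533557366784015754854400010240000000400⟩))))))))))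

def subtree4 : Tree :=
  .split (.split (.split (.relabel 543201) (.split (.relabel 543201) (.split (.split
    (.relabel 543201) (.split (.split (.relabel 541032) (.split (.relabel 531042) (.split
    (.leaf ⟨1, 2, 16, 50401050203, 1377825959528366080041948282880000010240000000001⟩)
    (.leaf ⟨1, 1, 17, 70503050103, 551133639847528366415586268283535441930240000000000⟩)))) (.split
    (.relabel 452310)
    (.leaf ⟨3, 5, 48, 141512130605, 1736070474537314873057078164849950720030720000000000⟩))))
    (.split (.split (.split (.relabel 541032) (.split (.relabel 534201)
    (.leaf ⟨2, 4, 32, 100707100405, 1157242861041014433382484001423360000010291200000001⟩))) (.split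
    (.leaf ⟨4, 14, 54, 151620110712, 115586709627054646624256230689341521920102400320800⟩)
    (.leaf ⟨3, 8, 43, 131214160408, 86803032809043237273725949706928291870796800000000⟩))) (.split
    (.split (.relabel 541032) (.split (.relabel 531042)
    (.leaf ⟨3, 0, 51, 211109150707, 1735864291625946160520358909706240245780531200000002⟩))) (.split
    (.leaf ⟨3, 2, 52, 151412090807, 1736060682011979179622442168485806325760000000480400⟩)
    (.leaf ⟨3, 4, 44, 171214140905, 1186314660649467747384814799421440245780480000001200⟩)))))))
    (.split (.split (.split (.relabel 452310)
    (.leaf ⟨7, 15, 111, 282613140915, 2941699269427133310572272062300324413440000064160000⟩))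
    (.split (.relabel 452310) (.split (.split
    (.leaf ⟨3, 6, 48, 111208040809, 86597192208562624924116598128738385920051392480000⟩)
    (.leaf ⟨3, 5, 49, 81515080808, 1735854523519548109359572807843905536000076800161200⟩)) (.split
    (.leaf ⟨1, 2, 15, 40502000403, 578621430112485323572038866042912768000000064160400⟩)
    (.leaf ⟨3, 0, 54, 121614080906, 1735991962535296866716116912702849024000000000161200⟩)))))
    (.split (.split (.relabel 452310) (.relabel 452310)) (.split (.relabel 452310) (.split (.split
    (.split (.leaf ⟨3, 4, 50, 131304041107, 1736060140784950286748116598128640000000000192480000⟩)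
    (.leaf ⟨2, 3, 30, 80607100605, 1128518119766440175543622261800960000000051264000002⟩))
    (.leaf ⟨4, 0, 72, 151918151009, 2314685728404303301840155883602641059840102400320400⟩)) (.split
    (.split (.leaf ⟨3, 0, 52, 161604041206, 1736060140846153570716116598128738549760000192480000⟩)
    (.leaf ⟨6, 5, 88, 312619272116, 3472140900069358646072233825403011563550720384000406⟩))
    (.leaf ⟨6, 0, 98, 283325212015, 3472141979867086533432233825405698457600000000801203⟩)))))))
    (.split (.split (.split (.split (.split (.relabel 354201) (.relabel 354201)) (.split
    (.relabel 354201) (.relabel 354201))) (.split (.split (.relabel 354201) (.split (.split (.split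
    (.relabel 531042)
    (.leaf ⟨1, 4, 12, 40503020202, 578618165915811974217769943040688128000000064000000⟩))
    (.leaf ⟨3, 4, 50, 161011070508, 86734288464293585223680015730606325790720128000000⟩)) (.split
    (.split (.relabel 345201)
    (.leaf ⟨1, 0, 18, 40704020202, 578618174527224087052288005243568128000000000000001⟩))
    (.leaf ⟨2, 2, 31, 81010050305, 606250104345555502104617953527136256020480000000000⟩)))) (.split
    (.relabel 354201) (.split (.split
    (.leaf ⟨2, 6, 27, 80609030506, 57724533137507509862400000001376419840000128320000⟩)
    (.leaf ⟨1, 0, 18, 50305020303, 578621430541982053171241943040688209920000064000400⟩))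
    (.leaf ⟨3, 1, 53, 121415090904, 1186315176045543266713732125820944384000000000160000⟩)))))
    (.split (.split (.relabel 452310) (.split (.relabel 532401) (.split (.split
    (.leaf ⟨4, 5, 67, 211409091405, 665479413227034824891600742646415687680000000161200⟩) (.split
    (.leaf ⟨1, 0, 18, 60203030303, 549759250312862053171241948283535441920000064000400⟩)
    (.leaf ⟨1, 0, 17, 70402050302, 578621430541982053506786268282880081930240000000001⟩)))
    (.leaf ⟨3, 5, 43, 171109111008, 1736070989933543267720358804849295605760000000320802⟩))))
    (.split (.split (.split (.split
    (.leaf ⟨5, 20, 70, 131313131412, 110226040684554737418407793132175360010240000001203⟩) (.split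
    (.leaf ⟨3, 10, 44, 110909090610, 577250477818563788800083901809950720030720192000400⟩)
    (.leaf ⟨1, 2, 16, 40404050202, 578617994546619413954604045435535360010240000000000⟩))) (.split
    (.relabel 452310)
    (.leaf ⟨5, 21, 55, 201925241010, 1788441604873270382108564547176398848020582400000000⟩)))
    (.split (.split (.split
    (.leaf ⟨2, 3, 33, 70704030704, 55044300908491041669161943040000081930240128160000⟩) (.split
    (.relabel 452310)
    (.leaf ⟨2, 6, 23, 111206060403, 1102260579116583611269203891323601059850240000000000⟩))) (.split
    (.leaf ⟨3, 2, 52, 140912061007, 1731737687047793666949245844849950720000000192000800⟩) (.split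
    (.leaf ⟨1, 3, 12, 50402050203, 27491227119208366415586268282880000010240000000001⟩)
    (.leaf ⟨1, 2, 13, 70504050202, 551133639847531050770146268283535441930240000000000⟩)))) (.split
    (.relabel 452310)
    (.leaf ⟨3, 0, 51, 141413140605, 1736070474537314873057082359153950720030720000000000⟩))))
    (.split (.split (.split
    (.leaf ⟨4, 16, 51, 130915091309, 1210837180947528208235972531322880081920077056160001⟩) (.split
    (.leaf ⟨3, 11, 36, 150914070909, 1181985309069361650073725844850049024000000192000801⟩)
    (.leaf ⟨3, 8, 39, 150914160708, 1186108477673521650409270164849360896000076864000003⟩))) (.split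
    (.leaf ⟨3, 9, 37, 131415110707, 1183556088991242099433272262002704547840025600480000⟩)
    (.leaf ⟨3, 0, 51, 131216130706, 1736070474476264462745730039154016256000076800000001⟩))) (.split
    (.split (.split
    (.leaf ⟨3, 11, 35, 110909041105, 1731730814219700089651283886080000245760000064320400⟩)
    (.leaf ⟨3, 0, 51, 171209131208, 85212667880316444040358804848705781760000128480003⟩)) (.split
    (.leaf ⟨3, 0, 49, 181014061008, 1731741123021786159513725844850049269760000192001200⟩)
    (.leaf ⟨3, 0, 47, 211112150908, 1735864291625946160520358804849393909770265728000003⟩))) (.split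
    (.leaf ⟨3, 6, 39, 121414100908, 1736060681968975819571330039154671779840000000480401⟩)
    (.leaf ⟨3, 1, 44, 161217130806, 1736070474537467746713730039154704629760000000000801⟩)))))))
    (.split (.split (.split (.relabel 452310)
    (.leaf ⟨5, 8, 82, 161615151212, 2838338459364256382980194309243044249600051264160802⟩)) (.split
    (.relabel 452310) (.split (.split
    (.leaf ⟨1, 2, 16, 30404020302, 578621430521580958516038860800032768000025664000000⟩)
    (.leaf ⟨6, 11, 88, 202929191611, 3469049603291559965513012509409476608000153600480002⟩)) (.split
    (.leaf ⟨3, 2, 52, 111412061107, 1735864807000546843036116598128738304000000128320800⟩)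
    (.leaf ⟨3, 1, 47, 111713090905, 1736070989933543266732893814129393664000000000160402⟩)))))
    (.split (.split (.relabel 452310) (.relabel 452310)) (.split (.relabel 452310) (.split (.split
    (.leaf ⟨6, 4, 104, 272420212313, 3472141930778831565624233196257378549760025984480402⟩)
    (.leaf ⟨6, 11, 81, 233126261912, 3470764154235049423672235293409444249600128000960400⟩)) (.split
    (.split (.leaf ⟨3, 5, 40, 131410101208, 1736060657509190755944077737328738549760000192480401⟩)
    (.leaf ⟨3, 0, 48, 171112121109, 1736070450056154159849983196528738467840000192000803⟩))
    (.leaf ⟨9, 0, 141, 375137353523, 5208188917983772334366077794386215567360000001443206⟩)))))))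

def subtree5 : Tree :=
  .split (.relabel 534210) (.split (.split (.split (.relabel 543201) (.split (.relabel 543201)
    (.split (.relabel 543201) (.split (.relabel 534210) (.split (.split (.relabel 541032) (.split
    (.relabel 534210)
    (.leaf ⟨1, 0, 14, 70404050202, 578621430541982053506786373153587281930265600000000⟩))) (.split
    (.leaf ⟨3, 0, 51, 191313070810, 1735991962535296867720233185483161845760000000481200⟩)
    (.leaf ⟨3, 0, 47, 201314130709, 1736070474537467747720358804887961845780531200160003⟩)))))))
    (.split (.split (.split (.relabel 453201) (.relabel 453201)) (.split (.relabel 453201) (.split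
    (.relabel 453201) (.split (.split (.relabel 541032)
    (.leaf ⟨3, 3, 46, 171512081111, 1736070450056154159515277842186338549760000192481201⟩))
    (.leaf ⟨3, 0, 51, 141712100910, 1736070989933543266716116702986338549760025600321202⟩)))))
    (.split (.split (.relabel 542301) (.split (.relabel 542301) (.split (.split (.split
    (.relabel 541032)
    (.leaf ⟨2, 3, 26, 140703050707, 1102260579546182347013488650511974563840000128320002⟩))
    (.leaf ⟨3, 4, 38, 201213130909, 1736070450056154160522749872740860149760076864480401⟩))
    (.leaf ⟨6, 2, 86, 342220202020, 3472141464471011015442143882851189227520051200802406⟩))))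
    (.split (.split (.relabel 452301) (.split (.split (.split (.relabel 541032)
    (.leaf ⟨3, 9, 34, 171506071010, 1735854155073469943528816655767994368000000192480003⟩))
    (.leaf ⟨3, 0, 50, 181408120910, 1736070450055993099248310697368027217950720192000403⟩)) (.split
    (.relabel 452301)
    (.leaf ⟨3, 0, 48, 171714140909, 1736070474537309639239165663025660067850265600001203⟩))))
    (.split (.split (.split (.split (.relabel 541032)
    (.leaf ⟨3, 4, 42, 161108080811, 1680878574050976832568688655767961600000076992480001⟩)) (.split
    (.leaf ⟨2, 0, 33, 110610070506, 1154562801448310568271216755356500049920051264000801⟩)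
    (.leaf ⟨3, 0, 44, 210812150808, 1708376500868195392905911011940761845770316864000003⟩))) (.split
    (.leaf ⟨3, 0, 49, 131413090810, 1736060681949755975812933238141747200000076800481200⟩)
    (.leaf ⟨3, 0, 46, 161116130509, 1736070474474117114321961185483161600030796800160001⟩))) (.split
    (.split (.split (.relabel 541032)
    (.leaf ⟨3, 0, 43, 181406061109, 1735854155073631004802416655767961600000000192480003⟩)) (.split
    (.leaf ⟨1, 0, 14, 70404030303, 577315760483998053506744325256020049920000064000401⟩)
    (.leaf ⟨1, 0, 13, 70504050203, 578621430541982053506744430113620049930265600000001⟩)))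
    (.leaf ⟨3, 1, 41, 171712111109, 1736070989933543267722749767870152949760025600481202⟩)))))))
    (.split (.relabel 534210) (.split (.split (.split (.split (.relabel 254301) (.relabel 254301))
    (.split (.relabel 534210) (.split
    (.leaf ⟨9, 16, 130, 513232221929, 5208212894209205390540800042048193249280000000962400⟩)
    (.leaf ⟨3, 0, 48, 131313100611, 1736070818134851426714438866056052981780556800481200⟩))))
    (.split (.split (.relabel 432501) (.split (.split
    (.leaf ⟨3, 4, 50, 121509080811, 1736060484443378873796239829237858304020480192001201⟩)
    (.leaf ⟨9, 0, 146, 374329362630, 5208211350167995400852412065382694912081946048001609⟩)) (.split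
    (.leaf ⟨3, 4, 43, 121613100809, 1736060682011879858506198695280738304010265600001202⟩)
    (.leaf ⟨3, 2, 42, 131713110807, 1736070474537314872740701808885858304030720000000403⟩))))
    (.split (.relabel 534210) (.split (.split (.split
    (.leaf ⟨1, 1, 17, 40404010404, 577243604603928523571200000000032768000000064160401⟩)
    (.leaf ⟨1, 0, 16, 50604030304, 578618166366837093172038866056019968000000064160001⟩))
    (.leaf ⟨3, 0, 47, 161314081112, 1736070450056154159513602112893845667840000192481202⟩)) (.split
    (.leaf ⟨3, 0, 48, 151713121109, 1736060682012033000984176246128738467840000000480803⟩)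
    (.leaf ⟨3, 0, 43, 171620091009, 1736070474537468149401179405720060067840025600161203⟩))))))
    (.split (.split (.split (.relabel 254301) (.relabel 254301)) (.split (.relabel 534210) (.split
    (.split (.split
    (.leaf ⟨1, 1, 14, 60303040404, 549824705614453093506744325256020049920000064160401⟩)
    (.leaf ⟨1, 0, 15, 60402050304, 551130375672437093171200005256020049930240064160001⟩))
    (.leaf ⟨4, 0, 60, 251015181313, 2204809437297272214026977301023981895680076864321603⟩)) (.split
    (.leaf ⟨3, 0, 43, 171210120910, 1736060682012032873760030735767961845780505600480802⟩)
    (.leaf ⟨3, 0, 39, 191213130809, 1736070474537467767852892175767961845770291200321200⟩)))))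
    (.split (.split (.split (.split (.split
    (.leaf ⟨1, 5, 9, 20303040204, 549824705163427840000000000000032768010265600160400⟩)
    (.leaf ⟨2, 7, 21, 80905100405, 1102260751303964757736816645242912768020505600320000⟩)) (.split
    (.relabel 534210)
    (.leaf ⟨2, 0, 32, 110808130305, 1157242861043057227874489603208020131860531200000000⟩))) (.split
    (.split (.leaf ⟨1, 4, 11, 40505050203, 577312504447765250572290102394880000010265600160000⟩)
    (.leaf ⟨1, 3, 11, 40604050203, 578618174505749250573126866042880000010265600160000⟩)) (.split
    (.relabel 534210)
    (.leaf ⟨3, 7, 32, 171713190507, 1735864316045898489488054697328673013790796800160000⟩))))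
    (.split (.split (.split
    (.leaf ⟨4, 14, 45, 141714121615, 2309249469839124789010104320000131153920000256641603⟩)
    (.leaf ⟨2, 5, 23, 91106070708, 1102260751344766946377728010512039936010240064320802⟩)) (.split
    (.leaf ⟨3, 4, 38, 131312120909, 1731947281451841151303680015741845504030720000161202⟩)
    (.leaf ⟨1, 1, 13, 70404050303, 578621430541931050770104325255987281930240000000401⟩))) (.split
    (.split (.leaf ⟨3, 0, 49, 141613130709, 1731937513407719858840063196541845504030745600161200⟩)
    (.leaf ⟨2, 0, 29, 101209080606, 1157236349054448040223231191298932736010265600320800⟩))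
    (.leaf ⟨3, 0, 44, 171316140909, 1736070474537314739174768655768060067840076800161202⟩))))
    (.split (.relabel 534210) (.split (.split (.split
    (.leaf ⟨1, 1, 13, 60404030403, 577312496308853093506744325256019968000000064160400⟩)
    (.leaf ⟨3, 2, 39, 171512121012, 1735854499100511279513600015768060067840051392480403⟩)) (.split
    (.relabel 534210)
    (.leaf ⟨2, 0, 27, 140908100706, 1157242861083964107013488650512007331850240128160002⟩))) (.split
    (.leaf ⟨6, 0, 87, 342731251824, 3472121364024065733762744351536120299520128192482406⟩)
    (.leaf ⟨4, 0, 54, 262024171312, 2314760632716624066280161301024080199700480064321602⟩)))))))))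

def subtree6 : Tree :=
  .split (.relabel 542310) (.split (.relabel 534210) (.split (.split (.split (.relabel 543201)
    (.split (.split (.relabel 542310) (.split (.relabel 534210) (.split (.split
    (.leaf ⟨3, 4, 50, 200803030707, 1736060140846153571720232975767961845760000000320000⟩) (.split
    (.relabel 534210) (.split (.relabel 542310)
    (.leaf ⟨1, 2, 13, 80404040103, 551133639847582060217630725255987281930265600000000⟩)))) (.split
    (.leaf ⟨3, 0, 54, 190906070811, 1736060338414649187720232975767961845760000000480803⟩)
    (.leaf ⟨3, 1, 53, 191013130909, 1736070474537467761142005880625561845780505600001203⟩)))))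
    (.split (.split (.split (.split
    (.leaf ⟨3, 15, 38, 130604070311, 554085141351864730606632975767961600000076800320000⟩) (.split
    (.relabel 534210)
    (.leaf ⟨1, 2, 16, 60202050003, 551133639826053529935544325255987200010265600000000⟩)))
    (.leaf ⟨5, 19, 71, 251515200018, 2342317984615235585677721621023949127731328000000000⟩)) (.split
    (.split (.leaf ⟨3, 13, 37, 181004040811, 1736060140845992510446632975767961763850240192480400⟩)
    (.split (.leaf ⟨1, 1, 17, 60202020303, 549759250312808366415544325255987200000000064000401⟩)
    (.leaf ⟨1, 2, 14, 70402050202, 578621430541928366415586268295987281930240000000001⟩)))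
    (.leaf ⟨3, 4, 50, 171208110610, 1736067553959545406446632975767961845790745600480401⟩))) (.split
    (.relabel 534210) (.split (.split (.split (.relabel 541032)
    (.leaf ⟨1, 0, 18, 70301030403, 551130203873745253506744325255987281920000064160001⟩)) (.split
    (.relabel 534210)
    (.leaf ⟨1, 1, 14, 70404050202, 578621430541982053506786373153587281930265600000000⟩)))
    (.leaf ⟨3, 0, 51, 181011101009, 1736070989933543401937961080625561845770240000481202⟩))))))
    (.split (.split (.relabel 542310) (.split (.split (.relabel 453201) (.split (.split (.split
    (.leaf ⟨4, 25, 47, 191911021213, 1209462790639507398983680020971524915200000192480402⟩)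
    (.leaf ⟨3, 10, 44, 151703060908, 1735853982415784643708059663728640000030720128480000⟩)) (.split
    (.leaf ⟨2, 8, 28, 90906070506, 55119892762394686914560010485760000020480000000802⟩)
    (.leaf ⟨2, 5, 29, 111106080404, 1157242861083859550765842442498868838420480000000001⟩))) (.split
    (.relabel 453201)
    (.leaf ⟨6, 7, 96, 282815211415, 3472140949074621424044343327457284915261440000000803⟩))))
    (.split (.split (.split (.split
    (.leaf ⟨2, 11, 22, 80806020505, 1154487209596551587431238866042881638400025600320400⟩)
    (.leaf ⟨1, 3, 14, 50403010203, 578618165916939268915200005242881638400000000160000⟩))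
    (.leaf ⟨5, 19, 64, 251623140516, 694221335574511488107282458227515801600128000000800⟩)) (.split
    (.leaf ⟨1, 2, 16, 40404030103, 578686893982536119091200005242881638400025600160000⟩)
    (.leaf ⟨3, 3, 51, 141117100311, 86803024219108913709056015767966597140556800000800⟩))) (.split
    (.split (.split
    (.leaf ⟨2, 9, 26, 90805010706, 1154487209186382210662400010485760000000000000320801⟩)
    (.leaf ⟨1, 3, 13, 60502020302, 578617994568145253171200005255987200000000000160001⟩))
    (.leaf ⟨3, 4, 50, 171212080907, 1736070450056154159513600015728645160960000000001201⟩)) (.split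
    (.leaf ⟨3, 4, 49, 151309101008, 1736060510191866190283931663741748920320000000480802⟩)
    (.leaf ⟨3, 0, 49, 171213080907, 1736070474537467746730377546301445160960000000001201⟩))))))
    (.split (.relabel 542310) (.split (.relabel 542310) (.split (.split (.split (.split
    (.leaf ⟨3, 7, 47, 140806091008, 1649267786123759426952232975728640000000051264480002⟩)
    (.leaf ⟨1, 0, 18, 60302030302, 551130203853344158850744325255987200000025600160000⟩)) (.split
    (.leaf ⟨1, 2, 14, 60204030202, 577247040985787217026744325242880081920025600000400⟩)
    (.leaf ⟨1, 0, 16, 70204050202, 578621430520507217026744430113587281920025600000001⟩)))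
    (.leaf ⟨3, 0, 53, 160911110710, 1736070989870192500104232975754854563840076800320802⟩)) (.split
    (.split (.split
    (.leaf ⟨1, 1, 17, 60402010402, 549755814339025253506744325255987200000000000160400⟩)
    (.leaf ⟨1, 0, 17, 60401030402, 551130203873745253506744325255987200000000000160001⟩)) (.split
    (.leaf ⟨1, 0, 17, 70304030402, 577315760483998053506744325255987281920000000000401⟩)
    (.leaf ⟨1, 0, 16, 70404050302, 578621430541982053506744430113587281920025600000001⟩))) (.split
    (.leaf ⟨3, 0, 50, 151109121109, 1736060510170391354760233185470054481930240000480803⟩)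
    (.leaf ⟨3, 1, 43, 201212130907, 1736070474537467747720233290340761845790720000000403⟩))))))))
    (.split (.relabel 534210) (.split (.split (.relabel 542310) (.split (.split (.relabel 432501)
    (.split (.split (.split
    (.leaf ⟨3, 13, 41, 131209080909, 82669530577837878165897231728641638410240000001203⟩)
    (.leaf ⟨3, 7, 47, 161607100707, 1735854154643975897662619663741748838430720064000001⟩)) (.split
    (.leaf ⟨2, 2, 34, 80908070506, 55119893191891416514564204789761638410240000000802⟩)
    (.leaf ⟨2, 5, 24, 111106070404, 1157242861083859550765842442498868838420480000000001⟩))) (.split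
    (.split (.leaf ⟨2, 7, 24, 90807080605, 55113381162474536993558636789761638400000000000802⟩)
    (.leaf ⟨3, 0, 52, 161608110607, 1735854523581666624062619663741748838430720000000002⟩))
    (.leaf ⟨6, 1, 107, 282822261415, 3472140949074621424044343327470392115261440000000404⟩))))
    (.split (.relabel 534210) (.split (.split (.split
    (.leaf ⟨3, 14, 36, 121212101107, 1731937488905030755942400000013107200000000000481201⟩)
    (.leaf ⟨3, 9, 38, 191310111109, 1735854499100511279547154447767961681920000128480003⟩)) (.split
    (.relabel 534210)
    (.leaf ⟨3, 0, 47, 201212090908, 1735864291625946159563931663767964958720000128000003⟩))) (.split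
    (.leaf ⟨3, 7, 40, 171213101108, 1736060681990558030283931663754856202240000000481201⟩)
    (.leaf ⟨3, 0, 46, 161115100909, 1736070474515992910283931663754859479040000000001203⟩))))))
    (.split (.relabel 542310) (.split (.relabel 542310) (.split (.relabel 534210) (.split (.split
    (.split (.leaf ⟨1, 2, 14, 60404030403, 577312496308853093506744325255987200000000064160400⟩)
    (.leaf ⟨1, 1, 14, 70403040403, 578618166366837093506744325255987281920000064160001⟩)) (.split
    (.relabel 534210)
    (.leaf ⟨2, 0, 31, 140808100705, 1157242861083964107013488650511974563840000064160402⟩))) (.split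
    (.leaf ⟨3, 0, 49, 181012131209, 1736060681969083194760232975767961845760000000481203⟩)
    (.leaf ⟨3, 2, 40, 191013141108, 1736070474515992911240232975767961845770240000161203⟩))))))))))

def subtree7 : Tree :=
  .split subtree3 (.split (.relabel 453210) (.split (.relabel 534210) (.split (.split (.split
    (.split (.relabel 543201) (.split (.relabel 453210) (.split (.relabel 534210) (.split
    (.relabel 543120) (.split (.relabel 453210)
    (.leaf ⟨3, 0, 54, 161620020305, 1734627365526012149366784015768059904000000064160400⟩))))))
    (.split (.split (.relabel 542301) (.split (.relabel 534210) (.split (.split (.relabel 543120)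
    (.leaf ⟨4, 8, 63, 261117041510, 2314691878880149322470522901023948800000000256001601⟩)) (.split
    (.leaf ⟨3, 5, 49, 151312041006, 1733311387546463680426147855767961600000000000480801⟩)
    (.leaf ⟨1, 0, 17, 60405020301, 578690158179155922617672668295987200000000000000400⟩))))) (.split
    (.split (.split (.relabel 543120)
    (.leaf ⟨12, 46, 168, 585555282214, 6930505687222235365732515903071846400020531200000000⟩))
    (.split (.relabel 543120)
    (.leaf ⟨7, 12, 107, 353431141407, 4048059478958280209061642276791910400000000000960400⟩)))
    (.split (.relabel 534210) (.split (.relabel 543120)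
    (.leaf ⟨4, 3, 69, 201918021505, 2314485754809626244971233510739148800000000000640400⟩))))))
    (.split (.relabel 453210) (.split (.split (.split (.relabel 542301) (.split (.split (.split
    (.relabel 543120)
    (.leaf ⟨1, 3, 15, 60501020204, 578617994138594836480000005255987204106240064160000⟩))
    (.leaf ⟨3, 4, 50, 151308080606, 1736070448767508298617323535741747208222720064000000⟩)) (.split
    (.relabel 453210)
    (.leaf ⟨3, 2, 46, 151309090605, 1736070465947377482618162501399347212308480000000000⟩))))
    (.split (.split (.split (.relabel 543120)
    (.leaf ⟨2, 3, 33, 90910060403, 604875707038066502208061450498932736000051264000000⟩))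
    (.leaf ⟨7, 16, 99, 302829171908, 4043953146483469395731415076726374400000102400000801⟩)) (.split
    (.split (.relabel 543120)
    (.leaf ⟨4, 0, 70, 251418071408, 2312011820146438781671361761823981568000025792001600⟩)) (.split
    (.leaf ⟨3, 1, 53, 151310081004, 1736060338414541833670492280612454404096000000160001⟩)
    (.leaf ⟨3, 0, 49, 161216080904, 1736070474537467767181803850340761600000051200000400⟩)))))
    (.split (.relabel 453210) (.split (.split (.relabel 543120)
    (.leaf ⟨3, 0, 53, 151315090903, 1731944385294343452190205558167961600000076800000000⟩)) (.split
    (.relabel 543120)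
    (.leaf ⟨3, 0, 50, 161713061201, 1736070989933543670375933558154854400000000000160000⟩)))))))
    (.split (.relabel 534210) (.split (.relabel 453210) (.split (.split (.split (.split (.split
    (.leaf ⟨3, 16, 38, 101010090905, 1676961563018949435378892810485760000000076864160000⟩)
    (.leaf ⟨6, 19, 89, 191928191709, 2886650956046023417816678405269159936000153600000800⟩)) (.split
    (.relabel 453210)
    (.leaf ⟨18, 67, 211, 717187654428, 10394429169726640037770035257750519844956416000000000⟩)))
    (.split (.split
    (.leaf ⟨18, 81, 226, 847557416725, 10243189483406175392445235278761164816384000513920000⟩)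
    (.leaf ⟨3, 3, 51, 141312091003, 1736070450056001171436339210511974404106240000000001⟩)) (.split
    (.relabel 453210)
    (.leaf ⟨3, 0, 52, 141214100804, 1736067038563477958636339205282201608212480000000000⟩))))
    (.split (.relabel 534210) (.split (.split (.relabel 543120) (.split (.relabel 534210)
    (.leaf ⟨2, 1, 30, 121010070502, 1157242861083964119764172810512039944192000000000000⟩))) (.split
    (.leaf ⟨3, 5, 43, 141414071103, 1736060682012032886846259215741779968000000000000800⟩)
    (.leaf ⟨3, 0, 50, 161416091003, 1736070474537467766846259215767994368000025600000001⟩)))))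
    (.split (.relabel 453210) (.split (.relabel 534210) (.split (.relabel 543120) (.split
    (.relabel 453210)
    (.leaf ⟨3, 0, 48, 171719101101, 1736070474537468149703167196568059904000025600000000⟩)))))))))))

def subtree8 : Tree :=
  .split (.relabel 453210) (.split (.relabel 542310) (.split (.relabel 453210) (.split (.split
    (.split (.relabel 543201) (.split (.relabel 453210) (.split (.relabel 542310) (.split
    (.relabel 453210) (.split (.split (.split (.split
    (.leaf ⟨3, 15, 24, 100709070708, 82532263359701581824000210003558400000076992160000⟩) (.split
    (.relabel 542310)
    (.leaf ⟨2, 0, 32, 110907070505, 1102260750873447973069311390528307281920051200320000⟩))) (.split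
    (.split (.relabel 325410)
    (.leaf ⟨1, 0, 16, 50406040202, 549827969769143405977272425132851200000025600000000⟩)) (.split
    (.relabel 542310)
    (.leaf ⟨1, 2, 11, 70305050103, 551133639826107217026744425132851281920025600000000⟩)))) (.split
    (.relabel 453210) (.split (.relabel 325410)
    (.leaf ⟨2, 2, 24, 101009130403, 57731249587984223511878251852595364044825600000000⟩)))) (.split
    (.split (.split
    (.leaf ⟨9, 0, 145, 363629162830, 5195262021880753684480000526241268122624000577442000⟩) (.split
    (.relabel 542310)
    (.leaf ⟨1, 1, 11, 60603030302, 551130375672437093172038965657632849920000064160000⟩))) (.split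
    (.leaf ⟨2, 3, 22, 110708080806, 55116457218105619922288849741480100249600128000802⟩)
    (.leaf ⟨3, 0, 39, 211211150909, 1735864291625946160520233274874364150374425792000003⟩))) (.split
    (.relabel 453210)
    (.leaf ⟨3, 2, 38, 131316160809, 1736070474537306685440000314874364150374476800000803⟩))))))))
    (.split (.split (.relabel 534201) (.split (.relabel 534201) (.split (.split (.relabel 325410)
    (.leaf ⟨3, 0, 51, 111112120605, 1736070991221875213147880554797465600614425600000000⟩)) (.split
    (.relabel 325410) (.split (.split
    (.leaf ⟨3, 0, 48, 121211121108, 1736060657530558218240006291495420150169600128480401⟩)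
    (.leaf ⟨3, 2, 41, 170915131007, 1736070450056154159849150611495387381964825728000403⟩))
    (.leaf ⟨3, 0, 42, 121216131208, 1731947821329383400931460120615354614374400000480803⟩))))))
    (.split (.relabel 453210) (.split (.relabel 542310) (.split (.relabel 453210) (.split
    (.relabel 325410) (.split (.split
    (.leaf ⟨3, 0, 42, 131310121109, 1736060657530558218240006291495420150374400192480002⟩)
    (.leaf ⟨4, 0, 53, 221320191513, 2314760600074818525929152708660560200499225856001604⟩))
    (.leaf ⟨9, 2, 115, 324743433231, 5208209533826310218975719457934836451123200001443609⟩))))))))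
    (.split (.split (.relabel 543201) (.split (.relabel 453210) (.split (.relabel 542310) (.split
    (.relabel 453210) (.split (.relabel 543201) (.split (.split (.split (.relabel 541032) (.split
    (.relabel 542310)
    (.leaf ⟨2, 0, 21, 131207070707, 1102260751344874320897350156956532900044825728320401⟩))) (.split
    (.leaf ⟨1, 1, 11, 70504030304, 577315760483998187724472325256020049920000064000401⟩)
    (.leaf ⟨1, 0, 11, 70704050303, 578621430541982187725311290913620050124825664000001⟩))) (.split
    (.relabel 453210)
    (.leaf ⟨3, 0, 34, 181817140909, 1736067038563631350375095011940860150169676800001203⟩))))))))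
    (.split (.split (.relabel 534201) (.split (.relabel 534201) (.split (.split (.relabel 534201)
    (.relabel 534201)) (.split (.relabel 534201) (.split (.split (.split
    (.leaf ⟨3, 5, 39, 171111091112, 1731799706375596360555560965282201845760000192480803⟩)
    (.leaf ⟨2, 2, 24, 130908070608, 1157236332733620634140016650511974563840025728320002⟩))
    (.leaf ⟨6, 0, 82, 402227242021, 3472140900112308455258319780655923691520077184161606⟩))
    (.leaf ⟨3, 1, 39, 171616111111, 1736070989933543670373458918808027381760025664481203⟩))))))
    (.split (.relabel 453210) (.split (.relabel 542310) (.split (.relabel 453210) (.split (.split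
    (.split (.split (.split
    (.leaf ⟨4, 0, 68, 161515161414, 110226729597405652584077721600065699840000256481204⟩)
    (.leaf ⟨2, 0, 30, 100709090608, 1099649411185902826292038860826214564044851328320401⟩)) (.split
    (.relabel 542310)
    (.leaf ⟨1, 0, 13, 50405040304, 551130375650962390908928000013107281920025664160001⟩))) (.split
    (.leaf ⟨3, 7, 31, 151115131110, 1731947281389717403163688965256052817920000192001203⟩)
    (.leaf ⟨3, 7, 28, 181314161012, 1735864291561521784629388918167961845760051392480403⟩))) (.split
    (.relabel 453210)
    (.leaf ⟨9, 0, 119, 383852523432, 5208211423423264827823584444494741996134425793443609⟩)))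
    (.split (.split (.split (.split
    (.leaf ⟨1, 0, 14, 50604040404, 27556682420853093172038860813140050124800064160401⟩)
    (.leaf ⟨2, 1, 22, 110907080807, 1099649411228852499587583186055987364249600128160802⟩)) (.split
    (.relabel 542310)
    (.leaf ⟨1, 0, 11, 70504040304, 551130375672437093171200005256020049920025664160001⟩))) (.split
    (.leaf ⟨2, 1, 22, 121010070807, 1154631520967996375113400325269160100044800128160802⟩)
    (.leaf ⟨1, 0, 11, 60504060304, 578621430541928366416383186056020049920025664000401⟩))) (.split
    (.relabel 453210)
    (.leaf ⟨3, 0, 33, 171818141012,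
      1736070474537468149703167196568060150374451328321203⟩))))))))))))

def subtree9 : Tree :=
  .split (.split (.split (.split (.split (.relabel 532401) (.relabel 532401)) (.split
    (.relabel 532401) (.relabel 532401))) (.split (.split (.relabel 350421) (.split
    (.relabel 543120) (.split (.split (.relabel 543120) (.split (.relabel 421503)
    (.leaf ⟨1, 0, 16, 40804040304, 551130383832824087052332045435568128010265600160000⟩)))
    (.leaf ⟨3, 0, 53, 141513090912, 1736070448767511230939219901810704465950745600161200⟩))))
    (.split (.relabel 350421) (.split (.relabel 543120) (.split (.relabel 543120)
    (.leaf ⟨3, 0, 46, 161315111011, 1736070465947533154747282374002049269770291200321200⟩))))))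
    (.split (.split (.split (.relabel 532401) (.split (.split (.split (.relabel 543120) (.split
    (.relabel 421503) (.relabel 421503))) (.split (.relabel 531402) (.split (.relabel 523401)
    (.leaf ⟨2, 3, 26, 150906100909, 1102267279695059423896623130870481059860508160320002⟩))))
    (.split (.split
    (.leaf ⟨3, 6, 48, 91207101212, 632219366424250941440130028666912849940480000480803⟩) (.split
    (.relabel 421503)
    (.leaf ⟨1, 0, 16, 60602040204, 551130383832821268815586268283535441930240000160000⟩)))
    (.leaf ⟨10, 0, 165, 514032482942, 5775906422563589326478141082834371379302534400003610⟩))))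
    (.split (.relabel 532401) (.split (.split (.relabel 543120) (.split (.relabel 543120) (.split
    (.leaf ⟨2, 0, 32, 130606101007, 2755651919164113388918810869760163840053760160402⟩)
    (.leaf ⟨1, 0, 14, 70504050505, 551133639847582060217674765434912849930266880160401⟩)))) (.split
    (.split (.leaf ⟨1, 3, 12, 50303030503, 549755985708220363571244045434880081920000000160401⟩)
    (.split (.leaf ⟨1, 0, 17, 60301040504, 1374561354940363571241948282880081920001280160001⟩)
    (.leaf ⟨1, 0, 14, 70504030505, 551130375242940370617674765435568209920001280160401⟩))) (.split
    (.leaf ⟨1, 2, 12, 70304030503, 549759249883365330617672668283568209920001280000401⟩)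
    (.leaf ⟨1, 0, 14, 70404050503, 578621430112485330617674765434912849920026880160001⟩))))))
    (.split (.split (.split (.relabel 543120) (.split (.split (.split (.relabel 421503)
    (.leaf ⟨1, 5, 9, 50504040403, 549824705164504266514148365435535360010240000160000⟩)) (.split
    (.relabel 421503)
    (.leaf ⟨1, 0, 16, 50505040203, 551130375222488400731834422395535360010265600000000⟩))) (.split
    (.leaf ⟨2, 6, 22, 90810080507, 604875706177951103262480410871136256020531200000400⟩)
    (.leaf ⟨1, 2, 12, 60504050303, 578621430092033360731876365435535360010266880000000⟩)))) (.split
    (.relabel 543120) (.split (.split (.relabel 543120) (.split (.relabel 421503)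
    (.leaf ⟨1, 0, 15, 50705030304, 551130383832824087052332045435568128000025600160000⟩))) (.split
    (.leaf ⟨2, 0, 32, 110909070907, 1154631520108900642340294633719136256020482560000801⟩)
    (.leaf ⟨3, 0, 46, 171512151212, 1735864298927237554839354359154049105950800640000003⟩)))))
    (.split (.split (.relabel 543120) (.split (.relabel 543120) (.split
    (.leaf ⟨1, 2, 11, 60406040303, 577315768624034821250788365435568209920025600000400⟩)
    (.leaf ⟨3, 0, 44, 201313161010, 1735864290276252687752362999154049269780560640320000⟩))))
    (.split (.relabel 543120) (.split (.relabel 543120)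
    (.leaf ⟨6, 6, 77, 402127253219, 3472140906125262535440730192612590059530324480162403⟩)))))))
    (.split (.split (.split (.split (.relabel 250431) (.split
    (.leaf ⟨3, 4, 50, 111201091013, 1676971698774542909442516582400098549790723840480003⟩)
    (.leaf ⟨3, 0, 53, 91606120612, 1736060673421937213442516582400098549790720000480003⟩))) (.split
    (.leaf ⟨6, 4, 104, 201713152124, 3389471366899513373496233170043077099520153600801606⟩)
    (.leaf ⟨6, 0, 104, 272512122621, 3472140897535327941432235272437957099571205120962401⟩)))
    (.split (.split (.split (.relabel 543120) (.split (.split (.split (.relabel 421503)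
    (.leaf ⟨2, 4, 32, 71210060609, 1099580699441133382534797732086480896010291200160800⟩)) (.split
    (.relabel 421503)
    (.leaf ⟨1, 1, 15, 40605030205, 551130375221414658573126866043568128010265600000400⟩)))
    (.leaf ⟨3, 2, 48, 121514110611, 1186314634816160597543380598130049024030796800000800⟩))) (.split
    (.relabel 543120) (.split (.split (.relabel 543120) (.split (.relabel 421503)
    (.leaf ⟨1, 1, 12, 40804040304, 551130383832824087069904082043568128010265600160000⟩)))
    (.leaf ⟨3, 0, 48, 131613091211, 1736070448767511365176157814130049024020505600001202⟩))))
    (.split (.split (.relabel 543120)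
    (.leaf ⟨6, 11, 84, 243225222623, 3472121355311724573496237390561477017600153600962404⟩)) (.split
    (.relabel 543120)
    (.leaf ⟨6, 0, 95, 253425232624, 3472121364024065867649963293410132459520153600962405⟩)))))
    (.split (.split (.split (.split (.split
    (.leaf ⟨2, 6, 30, 60602080608, 1101023628062883840000838860800065699860505600320001⟩)
    (.leaf ⟨1, 1, 16, 50302050304, 551202358874369226179398866042912849930266880000001⟩)) (.split
    (.leaf ⟨9, 29, 117, 233119413140, 11614132736434938846589747200164577372339201440008⟩)
    (.leaf ⟨3, 0, 52, 141009190808, 1681094893087311455544829547642880245790796800000002⟩))) (.split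
    (.split (.leaf ⟨4, 10, 60, 131703141719, 2284510284654533672962516582400131317800965120640004⟩)
    (.leaf ⟨3, 0, 52, 181005141209, 1707208268538390963512829558128640245790723840000002⟩)) (.split
    (.leaf ⟨3, 0, 53, 101507131311, 1736060510213185334151640776704065699870720000480003⟩)
    (.leaf ⟨3, 0, 46, 161308161209, 1736070457357445562223718055280705781790745600160003⟩))))
    (.split (.split (.split (.relabel 543120)
    (.leaf ⟨2, 1, 32, 100506100808, 1099655938677252981230508452085792931850293760160802⟩)) (.split
    (.leaf ⟨4, 0, 66, 151314161718, 2200673218781801939597472584171651399680102400641604⟩)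
    (.leaf ⟨1, 0, 15, 60303050403, 551202358874420235962469586042880081920026880000401⟩))) (.split
    (.leaf ⟨9, 0, 155, 533119315529, 5208212377095142955168254965842019041310731521441608⟩)
    (.leaf ⟨6, 0, 92, 342316233618, 3472141928327478990156391807713411563530245120961206⟩))))
    (.split (.split (.split (.relabel 543120) (.split (.split (.split (.relabel 421503)
    (.leaf ⟨1, 0, 18, 40705040304, 549824713754438992397126866042912768010265600000400⟩)) (.split
    (.relabel 421503)
    (.leaf ⟨1, 2, 12, 40705040304, 551130383812422992397126866042912768010265600000400⟩)))
    (.leaf ⟨3, 0, 49, 141512151013, 1736070457296242270538198695282049269790798080000403⟩))) (.split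
    (.relabel 543120) (.split (.split (.relabel 543120) (.split (.relabel 421503)
    (.leaf ⟨2, 1, 26, 101509070807, 1102260767665648174106253732086480977930265600320401⟩)))
    (.leaf ⟨3, 0, 43, 151612141112, 1736070457357445688723926695282049269790798080000403⟩))))
    (.split (.split (.relabel 543120) (.split (.relabel 543120)
    (.leaf ⟨3, 1, 43, 161214151310, 1736070448706460687419209432432738549780558080000802⟩))) (.split
    (.relabel 543120) (.split (.relabel 543120)
    (.leaf ⟨3, 0, 43, 171613131711, 1736070465947533423487116918128705781760080640321202⟩)))))))

def subtree10 : Tree :=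
  .split (.split (.split (.relabel 543201) (.split (.relabel 543201) (.split (.split (.split
    (.relabel 543120) (.split (.relabel 452103) (.split (.relabel 534210)
    (.leaf ⟨3, 14, 38, 151212150808, 1735864290275020568002644200916254720030775040000000⟩))))
    (.split (.relabel 543120) (.split (.relabel 452103) (.split
    (.leaf ⟨2, 8, 25, 90808070707, 604806986744161957314644096058032209940481280000800⟩)
    (.leaf ⟨3, 9, 39, 171312151009, 1734489900802582962503806144219119861790723840000001⟩)))))
    (.split (.relabel 534210) (.split (.relabel 543120) (.split (.relabel 543120) (.split
    (.relabel 534210)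
    (.leaf ⟨6, 11, 90, 432526292915, 3471728580674911943440718208436961771520007680000006⟩))))))))
    (.split (.split (.split (.relabel 542301) (.split (.split
    (.leaf ⟨5, 14, 76, 110712121516, 27556681970096275460194828288164249600129280800000⟩)
    (.leaf ⟨3, 9, 45, 60910101110, 55113020343506803100116897235009781760076800320802⟩))
    (.leaf ⟨3, 4, 50, 131105051105, 1736067012793827170716116792639586549760000000480000⟩))) (.split
    (.split (.split (.relabel 543120) (.split (.relabel 450321)
    (.leaf ⟨2, 6, 30, 40710090304, 1127143729371545600001677931315265536010291200000400⟩))) (.split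
    (.relabel 543120) (.split (.relabel 452103)
    (.leaf ⟨3, 1, 53, 91514111006, 86803032873314872723924896972898304030721280000800⟩)))) (.split
    (.split (.relabel 543120) (.split (.relabel 543120)
    (.leaf ⟨1, 1, 17, 30305040302, 551202358874420228916038965919776768000025600000000⟩))) (.split
    (.relabel 543120)
    (.leaf ⟨4, 3, 69, 162017111608, 2314678839359438638288155863417618759680000000480400⟩)))))
    (.split (.split (.relabel 542301) (.split (.split (.split (.relabel 543120) (.split
    (.leaf ⟨1, 2, 16, 30003050403, 3435973836800000838965657600081920026880000401⟩)
    (.leaf ⟨2, 1, 35, 100505120806, 1102267279224865187432077931577409699840053760160002⟩))) (.split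
    (.leaf ⟨2, 7, 28, 50505080807, 28999619182645687092877931315200163840051200320002⟩)
    (.leaf ⟨3, 5, 49, 110712181107, 86803032810116979100116896972800245760076800000003⟩))) (.split
    (.split (.relabel 543120)
    (.leaf ⟨3, 2, 52, 160905131709, 1653607076684463977427003297235042549780483840320403⟩)) (.split
    (.leaf ⟨3, 6, 48, 121106091805, 1653596768741478747657889697234944245760001280480400⟩)
    (.leaf ⟨3, 1, 53, 181009131706, 1681094867378863991519864737759232245760003840000801⟩)))))
    (.split (.split (.split (.relabel 543120) (.split (.relabel 452103) (.split
    (.leaf ⟨2, 8, 24, 70807090504, 1127143729373693083649677931839488000000052480000000⟩)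
    (.leaf ⟨2, 2, 34, 90908120704, 57731249587935636358797931315200081940533760000000⟩)))) (.split
    (.relabel 543120) (.split (.relabel 452103)
    (.leaf ⟨6, 2, 106, 282926302516, 173606014207022596101033794735505899581497600000000⟩))))
    (.split (.split (.relabel 543120) (.split (.relabel 543120)
    (.leaf ⟨6, 9, 99, 242328302411, 3472134051235051549496233795256353095680153600000000⟩))) (.split
    (.relabel 543120) (.split (.relabel 543120)
    (.leaf ⟨6, 9, 91, 362325253413, 3472140897535327942438866755519185387520007680001601⟩))))))))
    (.split (.relabel 534210) (.split (.split (.split (.split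
    (.leaf ⟨12, 43, 173, 252424413133, 28314485999534080010091495424197427251328000962400⟩)
    (.leaf ⟨6, 7, 101, 162110202115, 687607943342724218885045747712197099560960000960004⟩)) (.split
    (.relabel 534210)
    (.leaf ⟨2, 0, 36, 70506061104, 1127137201064312727160859131904065699840001280320800⟩))) (.split
    (.split (.split (.relabel 543120) (.split (.split
    (.leaf ⟨3, 10, 43, 1111100813, 2522873856065536030796800481200⟩)
    (.leaf ⟨1, 1, 17, 20503040203, 551130375221414524355398860800032768010265600160000⟩))
    (.leaf ⟨1, 1, 17, 20404050202, 551202358874366541824840957952032768010265600000000⟩))) (.split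
    (.relabel 543120) (.split (.split (.relabel 543120)
    (.leaf ⟨1, 0, 18, 20504050403, 551130383832823952835400957952032768010265600160000⟩))
    (.leaf ⟨1, 1, 16, 30404040401, 551202358894770320835400957952032768010240000000000⟩)))) (.split
    (.relabel 534210)
    (.leaf ⟨5, 1, 89, 152022132605, 2343695802929991001313388789760163840000000000320800⟩))))
    (.split (.split (.split (.split
    (.leaf ⟨5, 17, 73, 140909251908, 2754634827853519252696869109760098467860531200000003⟩) (.split
    (.leaf ⟨2, 7, 27, 30605090708, 27556518761073276356241915904000163860531200320400⟩)
    (.leaf ⟨2, 2, 34, 70508120703, 607555782952671636358801915904000163840051200000001⟩))) (.split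
    (.leaf ⟨3, 4, 50, 100802131307, 1653600548334012989442522873856032931870722560320001⟩)
    (.leaf ⟨3, 3, 51, 101206161106, 86803539657972777298067193856000245790720000000002⟩))) (.split
    (.relabel 534210)
    (.leaf ⟨3, 1, 53, 140606111904, 1681095382774939490716122873856000245760003840320800⟩))) (.split
    (.split (.split (.relabel 543120) (.split (.split
    (.leaf ⟨3, 15, 34, 21112121210, 604731395276800000002522873856032768020556800480800⟩)
    (.leaf ⟨1, 3, 13, 40404050302, 578618165915814524355400957952655441930240000000000⟩)) (.split
    (.relabel 534210)
    (.leaf ⟨2, 0, 32, 90809120404, 57731249587935636358801915904000081940532480000000⟩)))) (.split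
    (.relabel 543120) (.split (.split (.relabel 543120)
    (.leaf ⟨1, 1, 15, 40404040401, 578618165937289360835400957952655360000000000000000⟩))
    (.leaf ⟨4, 2, 64, 181620201708, 2312011836467110467341603831810720071720962560000000⟩))))
    (.split (.relabel 534210) (.split (.relabel 543120) (.split (.relabel 543120)
    (.leaf ⟨2, 0, 34, 100810091303, 1156005909643722781361809916166176931840002560000800⟩))))))))

def subtree11 : Tree :=
  .split (.relabel 534210) (.split (.split (.split (.relabel 543201) (.split (.relabel 543201)
    (.split (.relabel 543201) (.split (.relabel 534210) (.split (.relabel 543120) (.split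
    (.relabel 543120) (.split (.relabel 534210)
    (.leaf ⟨3, 0, 42, 211616151515, 1735864307517325558373543119460761845790800640481203⟩))))))))
    (.split (.split (.split (.relabel 542301) (.relabel 542301)) (.split (.relabel 450321) (.split
    (.split (.relabel 543120) (.split (.relabel 543120)
    (.leaf ⟨12, 12, 173, 615456394267, 6943938231801901383427922392514921431163197441604808⟩)))
    (.split (.relabel 543120) (.split (.relabel 543120)
    (.leaf ⟨6, 0, 91, 392930182233, 3471934790644727493429716613936120299581498880962406⟩))))))
    (.split (.split (.relabel 542301) (.split (.relabel 542301) (.split (.split (.relabel 543120)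
    (.split (.relabel 543120) (.split (.relabel 542301)
    (.leaf ⟨1, 0, 13, 70605050505, 551133639847582060218469690913620049930266880160401⟩)))) (.split
    (.split (.leaf ⟨1, 2, 12, 70404030505, 577312332670599122618469690913587281920001280160401⟩)
    (.leaf ⟨3, 3, 40, 221612091416, 1735854162804572017143683811940860149770243840481203⟩)) (.split
    (.leaf ⟨1, 0, 13, 70504040505, 577315768644435922618469690913620049930241280160401⟩)
    (.leaf ⟨3, 0, 37, 221613141415, 1735864316107259767854570211940860149790775040480803⟩))))))
    (.split (.split (.split (.relabel 543120) (.split (.split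
    (.leaf ⟨7, 6, 120, 343125261634, 4041050032056699644537523441513333063751859201120400⟩)
    (.leaf ⟨3, 0, 50, 171611120815, 1735854506338449491977725558167994449950798080480002⟩)) (.split
    (.leaf ⟨6, 0, 99, 342428231929, 3463894560204290795686907116296601681981600000002403⟩)
    (.leaf ⟨3, 0, 47, 211313151115, 1735864290275026340374013663025561845790800640000803⟩))))
    (.split (.relabel 543120) (.split (.split (.relabel 543120)
    (.leaf ⟨3, 0, 43, 171812121015, 1735854514991734851592886802225659985950772480480403⟩)) (.split
    (.leaf ⟨1, 1, 12, 60604040405, 577315760054450455388671186042912849930266880160401⟩)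
    (.leaf ⟨3, 2, 35, 211813151315, 1735864307517172550166013872740827381790800640480403⟩)))))
    (.split (.split (.relabel 543120) (.split (.relabel 543120) (.split
    (.leaf ⟨3, 0, 43, 171115121115, 1731947305871030721930749663025561681940558080161203⟩)
    (.leaf ⟨1, 0, 13, 70405050505, 578621430092084363469311290913587281930266880160401⟩)))) (.split
    (.relabel 543120) (.split (.relabel 543120) (.split (.relabel 543120)
    (.leaf ⟨4, 0, 48, 292120192020, 2314485746219745474282678302854349127721067520641604⟩)))))))))
    (.split (.relabel 534210) (.split (.split (.split (.split (.relabel 250431) (.split (.split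
    (.leaf ⟨3, 5, 49, 131008061118, 1735853982415789878149122097178312949790722560481203⟩)
    (.leaf ⟨1, 0, 16, 50304030406, 578621430112434320835400957965140049930266880160401⟩)) (.split
    (.leaf ⟨7, 0, 125, 293017172539, 4050532117400379908426204986749977149511681281122807⟩)
    (.leaf ⟨9, 0, 145, 543344343249, 5208005187872324914362147961661326049372401920003609⟩))))
    (.split (.relabel 534210) (.split (.split (.relabel 543120)
    (.leaf ⟨3, 0, 46, 191013091017, 1735864290337455990847098076568060149790800640161203⟩)) (.split
    (.leaf ⟨3, 1, 46, 151210051117, 1735922701892681584135374912880738549770242560481203⟩)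
    (.leaf ⟨1, 0, 14, 60405030406, 578621430112485330282925266056020049930266880160401⟩))))) (.split
    (.split (.split (.relabel 543120) (.split (.split
    (.leaf ⟨6, 18, 77, 242726221429, 3463806255674534060364725752955076935731353600960400⟩)
    (.leaf ⟨3, 0, 53, 131712090616, 1735854325948752135718541737328738304030798080320001⟩)) (.split
    (.relabel 534210)
    (.leaf ⟨3, 0, 48, 161415100615, 1735864290272878855750418442512072704030800640000001⟩))))
    (.split (.relabel 543120) (.split (.split (.relabel 543120)
    (.leaf ⟨1, 1, 12, 50604040305, 578618174527223952835400963208019968010265600160001⟩))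
    (.leaf ⟨9, 11, 116, 484246333350, 5208005222232064060817414338681537249372396800963609⟩))))
    (.split (.relabel 534210) (.split (.relabel 543120) (.split (.relabel 543120)
    (.leaf ⟨3, 0, 42, 191417101317, 1735933026994061423149894876568060149790800640481203⟩))))))
    (.split (.split (.split (.relabel 250431) (.split (.split (.split (.relabel 543120)
    (.leaf ⟨1, 0, 17, 50402030406, 551130203444194836480000000013140049930266880160401⟩)) (.split
    (.leaf ⟨1, 0, 15, 60303040406, 549827969360050321170104325256020049930266880160401⟩)
    (.leaf ⟨1, 0, 14, 70404050405, 578621430112434327880992822408020049930266880160001⟩))) (.split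
    (.split (.leaf ⟨1, 3, 11, 50402040405, 549824541976145428815544320013107281930265600160401⟩)
    (.leaf ⟨2, 3, 24, 100906090711, 1129748214762661541985648640026280099860531200320802⟩)) (.split
    (.leaf ⟨1, 0, 14, 70303050305, 549827969360050321170104325256020049930266880000401⟩)
    (.leaf ⟨1, 0, 12, 70404050405, 578621430112434327880992822408020049930266880160001⟩))))) (.split
    (.relabel 534210) (.split (.split (.relabel 543120) (.split (.relabel 534210)
    (.leaf ⟨1, 0, 14, 70505050505, 578621430541982060217630725256020049930266880160401⟩))) (.split
    (.split (.leaf ⟨1, 1, 12, 70504040505, 577312504469290962617632822408020049930241280160401⟩)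
    (.leaf ⟨1, 0, 12, 70405050505, 578618174527274962617632822408020049930266880160401⟩)) (.split
    (.relabel 534210)
    (.leaf ⟨3, 0, 35, 221212141515, 1735864298927390583852892175767961845790800640481203⟩))))))
    (.split (.split (.split (.relabel 543120) (.split (.split (.split
    (.leaf ⟨2, 11, 14, 80808080809, 55044644465069848673648640000065617930291200320402⟩)
    (.leaf ⟨1, 4, 9, 70504050505, 549824705164504266514945283194880081930266880160401⟩))
    (.leaf ⟨1, 0, 15, 50505040505, 578618165916888400732671180813139968010266880160401⟩)) (.split
    (.relabel 534210)
    (.leaf ⟨3, 0, 42, 211412151215, 1735864307455968997761718697367961845790800640480003⟩))))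
    (.split (.relabel 543120) (.split (.split (.relabel 543120)
    (.leaf ⟨6, 0, 78, 313129252429, 3471709047163344524327832801850228899901568000962006⟩)) (.split
    (.leaf ⟨3, 0, 40, 201415131316, 1731947305933155007945768975767994613790800640481203⟩)
    (.leaf ⟨2, 0, 22, 141110100810, 1157242877404738094776505608464007331860533760320802⟩)))))
    (.split (.relabel 534210) (.split (.relabel 543120) (.split (.relabel 543120) (.split
    (.relabel 534210)
    (.leaf ⟨4, 0, 47, 292223191920, 2314485754809680200497889301024014663721067520641603⟩))))))))))

def subtree12 : Tree :=
  .split (.relabel 542310) (.split (.relabel 534210) (.split (.split (.split (.relabel 543201)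
    (.split (.split (.relabel 542310) (.split (.relabel 534210) (.split (.split (.relabel 543120)
    (.split (.relabel 534210) (.split (.relabel 542310)
    (.leaf ⟨3, 0, 50, 231313131313, 1653400919113249444342089871563165122580535040320802⟩))))
    (.split (.split
    (.leaf ⟨4, 8, 60, 291010081920, 2308974452775452463627019348921549127690270720641604⟩) (.split
    (.relabel 542310)
    (.leaf ⟨1, 1, 14, 70504040505, 551130383832874962617672668295988920330241280160401⟩))) (.split
    (.relabel 534210) (.split (.relabel 542310)
    (.leaf ⟨2, 0, 29, 160808080808, 1102267296016039838524417098409576202250268160160401⟩)))))))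
    (.split (.split (.split (.relabel 543120) (.split (.split
    (.leaf ⟨1, 4, 14, 50303020205, 577243604582400000335544325255987200010265600160400⟩)
    (.leaf ⟨1, 3, 14, 50403030205, 578617994117120000335544325255988838410265600160001⟩)) (.split
    (.relabel 534210)
    (.leaf ⟨1, 2, 15, 70403050205, 578621430090956800335544325255988920330266880160001⟩)))) (.split
    (.relabel 543120) (.split (.split (.relabel 543120) (.split
    (.leaf ⟨1, 2, 14, 60301030305, 1374389556194836815544325255987200010241280160001⟩)
    (.leaf ⟨1, 0, 17, 70504040305, 551130375242889361170146268295988920330266880160000⟩))) (.split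
    (.leaf ⟨1, 2, 13, 60303030306, 549759249883311636815544325255988920330266880160401⟩)
    (.leaf ⟨4, 0, 63, 291413201219, 2314485737629595865479947348921550766121067520640804⟩)))))
    (.split (.relabel 534210) (.split (.relabel 543120) (.split (.relabel 543120) (.split
    (.relabel 534210) (.split
    (.leaf ⟨1, 0, 14, 70404050505, 28865624814419915906786373153587281930266880160401⟩)
    (.leaf ⟨1, 0, 13, 80404040405, 551133639418085323906786373153587281930266880160400⟩)))))))))
    (.split (.split (.relabel 542310) (.split (.split (.split (.relabel 543120) (.split (.split
    (.leaf ⟨6, 27, 81, 262118090933, 164926744166400000035232185122825830441036800641200⟩) (.split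
    (.relabel 542310)
    (.leaf ⟨1, 3, 13, 50503030204, 551130375222485581824000005242881638410265600160000⟩))) (.split
    (.leaf ⟨2, 5, 31, 100607060210, 604738267224473600016777226511977676820531200000400⟩) (.split
    (.relabel 542310)
    (.leaf ⟨1, 0, 17, 60503030404, 551133639397633226195337221242881638410266880160000⟩))))) (.split
    (.relabel 543120) (.split (.split (.relabel 543120) (.split (.relabel 542310)
    (.leaf ⟨1, 0, 18, 80503030305, 551130375242889360851337221255988920330241280160000⟩))) (.split
    (.split (.leaf ⟨1, 2, 16, 60402030406, 3435995311636496777221242881720330241280160401⟩)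
    (.leaf ⟨2, 0, 35, 120809060810, 1099587219243364641669120115369577676820508160320801⟩)) (.split
    (.relabel 542310)
    (.leaf ⟨1, 0, 15, 70503030405, 551133639418034320834560005255988920330266880160001⟩))))))
    (.split (.split (.relabel 543120) (.split (.relabel 543120) (.split (.split
    (.leaf ⟨1, 2, 14, 50204020204, 3435973890487091200005242881638400025600000401⟩)
    (.leaf ⟨2, 3, 28, 150809080810, 1099655947269335049865632164111977840650293760160801⟩))
    (.leaf ⟨3, 0, 49, 211111130916, 1735864290273031729759387663767966760990800640320802⟩))))
    (.split (.relabel 543120) (.split (.relabel 543120) (.split (.relabel 543120)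
    (.leaf ⟨4, 0, 58, 281715151620, 2314485720449941294351908989881555681321067520640802⟩)))))))
    (.split (.relabel 542310) (.split (.relabel 542310) (.split (.split (.relabel 543120) (.split
    (.relabel 543120) (.split (.split
    (.leaf ⟨1, 0, 16, 60103030306, 3435973890487426744325255987281920026880000401⟩)
    (.leaf ⟨2, 0, 28, 150809070910, 1099655947269335050503166581827177840640053760320801⟩))
    (.leaf ⟨4, 0, 54, 291514190920, 2314485728955050417749544266681555681321067520320404⟩))))
    (.split (.relabel 543120) (.split (.relabel 543120) (.split (.relabel 543120)
    (.leaf ⟨6, 0, 81, 442221282929, 3471728580674911943440466266108726968381575680962005⟩)))))))))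
    (.split (.relabel 534210) (.split (.split (.relabel 542310) (.split (.split (.split
    (.relabel 543120) (.split (.split
    (.leaf ⟨9, 29, 133, 362626212150, 109951162777600000100663322279947632701672961442400⟩) (.split
    (.relabel 542310)
    (.leaf ⟨2, 3, 28, 111007070609, 1102260578646282142237906184437763276820533760320000⟩))) (.split
    (.relabel 534210) (.split (.relabel 542310)
    (.leaf ⟨3, 0, 49, 171212121014, 1653400918190752194938011653255992197150800640160401⟩)))))
    (.split (.relabel 543120) (.split (.split (.relabel 543120) (.split (.relabel 542310)
    (.leaf ⟨3, 5, 34, 221413121214, 1653391134318602674554856816023966760990775040480801⟩))) (.split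
    (.leaf ⟨3, 9, 35, 181111111115, 1731809841209873593844891663767966597150746880161203⟩)
    (.leaf ⟨3, 4, 37, 201211121115, 1735864290337297593844891663767966679070775040320803⟩)))))
    (.split (.relabel 534210) (.split (.relabel 543120) (.split (.relabel 543120) (.split
    (.relabel 534210)
    (.leaf ⟨1, 0, 13, 70404040405, 578621430112485323587977221255988920330266880160400⟩)))))))
    (.split (.relabel 542310) (.split (.relabel 542310) (.split (.relabel 534210) (.split
    (.relabel 543120) (.split (.relabel 543120) (.split (.relabel 534210)
    (.leaf ⟨9, 0, 108, 663131434344,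
      5207592871012367915160698927303888814162136321283208⟩)))))))))))

def subtree13 : Tree :=
  .split (.split (.relabel 543201) (.split (.relabel 453120) (.split (.relabel 542301) (.split
    (.split (.split (.split (.relabel 453120)
    (.leaf ⟨2, 0, 33, 60607070707, 55051172815357352419839390777344000409653760000402⟩)) (.split
    (.relabel 453120) (.split
    (.leaf ⟨1, 2, 13, 30404040404, 549827969339646676377272425132851200204825600000401⟩)
    (.leaf ⟨1, 1, 14, 30604060202, 578621430092030676042566965919776768204825600000000⟩)))) (.split
    (.leaf ⟨2, 0, 35, 71004040906, 606250095755615541396295071052627968409602560320000⟩) (.split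
    (.relabel 453120)
    (.leaf ⟨3, 0, 47, 121514141211, 1736070448767511365159380897536507904614476800000803⟩))))
    (.split (.split (.split (.relabel 453120) (.relabel 453120)) (.split (.relabel 453120) (.split
    (.leaf ⟨1, 2, 13, 40407040404, 577315768624034955132928105132883968000025600000401⟩)
    (.leaf ⟨1, 1, 14, 40606050303, 578621438681965268041728105132883968204825600000001⟩)))) (.split
    (.split (.relabel 453120) (.relabel 453120)) (.split (.relabel 453120)
    (.leaf ⟨3, 3, 41, 151415131711, 1736070448767556999520767495936507904614455040161203⟩))))))))
    (.split (.split (.split (.relabel 534201) (.split (.split (.relabel 534201)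
    (.leaf ⟨3, 1, 53, 61313020911, 1735933181612723152093190291495419904614400000481200⟩)) (.split
    (.relabel 534201) (.split
    (.leaf ⟨1, 0, 18, 30405000403, 578621430112431770697730097427283968000000000160400⟩)
    (.leaf ⟨6, 8, 82, 192934122315, 3463895462226976485408780583515127808819200000962400⟩)))))
    (.split (.relabel 532401) (.split (.split (.split
    (.leaf ⟨2, 3, 33, 40406050608, 1099655938678219341824004194330214400409651200160401⟩) (.split
    (.leaf ⟨2, 3, 31, 30709070708, 1099649066730546010595046457370214400409651200320402⟩)
    (.leaf ⟨2, 1, 30, 60711100706, 1099655955859162536754632720672358400409652480000402⟩)))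
    (.leaf ⟨3, 0, 54, 91212071208, 1736070973183010153693190291495354368614400000320800⟩)) (.split
    (.split (.leaf ⟨6, 6, 97, 181431182520, 1264872335437988647319646502990839808409754880322400⟩)
    (.split (.split (.relabel 320514)
    (.leaf ⟨2, 3, 26, 80910080808, 607480517945878806265944080672423936204825600320002⟩)) (.split
    (.relabel 320514)
    (.leaf ⟨1, 0, 14, 50406040403, 578621430092084363132972040467283968000026880000001⟩)))) (.split
    (.leaf ⟨3, 0, 53, 150812071908, 1736002244686896520191023251495321600000003840480802⟩) (.split
    (.leaf ⟨3, 4, 42, 131215081807, 1736060656242175806611218497575354368204801280481200⟩)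
    (.leaf ⟨2, 0, 30, 90813061306, 1156005918233657507577944080410279936000002560320802⟩)))))))
    (.split (.relabel 453120) (.split (.split (.split (.relabel 524301) (.split
    (.leaf ⟨3, 0, 53, 111006111210, 1653607592080378449572665491757465612902401280480002⟩)
    (.leaf ⟨3, 0, 50, 121410151207, 1736060682011871826579298451757498376806400000160402⟩))) (.split
    (.split (.split (.relabel 453120)
    (.leaf ⟨3, 0, 53, 110516121211, 577460070934118407047275872295419916288080640001201⟩)) (.split
    (.split (.leaf ⟨2, 0, 36, 50608080906, 55044300866609748871273775130279940096025600160401⟩)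
    (.leaf ⟨1, 0, 16, 40404060404, 28862352028885588870432817165139972300825600160001⟩)) (.split
    (.leaf ⟨1, 0, 17, 40206050304, 577247049147245133824002097165139972096025600000401⟩)
    (.leaf ⟨1, 1, 13, 50405060304, 578621430092030548870432817427283972300825600000001⟩)))) (.split
    (.leaf ⟨9, 0, 156, 462833295924, 1359922195275057460868355719286095880192011520483209⟩) (.split
    (.leaf ⟨6, 13, 71, 272621243320, 3472121312484136100154480525390839832780803840960806⟩)
    (.leaf ⟨3, 0, 45, 161013151710, 1736070448767502930579298451495419908505680640160803⟩)))))
    (.split (.split (.split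
    (.leaf ⟨2, 0, 35, 40507071108, 551130547022251298536820834330214400409653760320802⟩) (.split
    (.relabel 453120)
    (.leaf ⟨2, 0, 32, 50711100805, 1129823788966397352754548834330247168409651200000402⟩)))
    (.leaf ⟨3, 3, 43, 91512121407, 1736060674710427805565956653082279936614451200320401⟩)) (.split
    (.split (.leaf ⟨2, 2, 28, 70510061006, 604869177827709636197748834592423936000053760000800⟩)
    (.split (.relabel 453120)
    (.leaf ⟨4, 6, 49, 151527182008, 2310637455440871542782697669446991872000000000000404⟩))) (.split
    (.leaf ⟨3, 1, 44, 141111091907, 1736070964593075562701500973357498368000003840480002⟩) (.split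
    (.relabel 453120)
    (.leaf ⟨3, 2, 39, 141316131807, 1736070448767556999521612333619707904204803840160003⟩))))))))

def subtree14 : Tree :=
  .split (.relabel 542310) (.split (.split (.split (.relabel 543201) (.split (.relabel 543201)
    (.split (.relabel 542310) (.split (.relabel 542310) (.split (.split (.split (.relabel 541032)
    (.split (.split (.relabel 321054)
    (.leaf ⟨1, 0, 14, 60206020404, 549759249862964363468472425132851200000026880000400⟩)) (.split
    (.relabel 542310)
    (.leaf ⟨1, 1, 11, 70405050405, 551133639827181093068472425132851282124826880160001⟩)))) (.split
    (.split (.split (.relabel 321054)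
    (.leaf ⟨1, 0, 16, 50505040405, 549824713754489860915200105132851200204826880160400⟩)) (.split
    (.relabel 542310)
    (.leaf ⟨2, 3, 22, 81509100809, 1102260767624840616420678251852660736409652480320002⟩))) (.split
    (.leaf ⟨3, 0, 44, 121219141212, 1731947297282170273398784315385544786329676800001203⟩)
    (.leaf ⟨2, 0, 27, 101010130909, 57731249588037910603078251852595364044853760320402⟩)))) (.split
    (.split (.relabel 541032) (.split
    (.leaf ⟨1, 1, 12, 60204040503, 577315760054447636815544424870707281920026880000401⟩)
    (.leaf ⟨1, 0, 12, 70404050503, 578621430541982187724472424870707282124826880160001⟩))) (.split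
    (.split (.leaf ⟨3, 7, 33, 151414131514, 1731868793931029626751444897798553845760053760481203⟩)
    (.leaf ⟨3, 0, 41, 171913141414, 1735854523581717895184384315398652150374480640480403⟩))
    (.leaf ⟨6, 0, 81, 312629303228, 3472140914714929361735123574010741228134561280962406⟩))))))))
    (.split (.split (.relabel 534201) (.split (.relabel 534201) (.split (.split (.relabel 534201)
    (.leaf ⟨6, 3, 102, 252323232624, 3472141948084009508494431486292787201228832000481203⟩)) (.split
    (.relabel 534201) (.split
    (.leaf ⟨3, 0, 46, 180711101810, 1736070964163739625937967251495321845964829440161203⟩) (.split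
    (.leaf ⟨3, 0, 43, 151116131811, 1736060673422098543484690497575321846374453760481203⟩)
    (.leaf ⟨3, 0, 37, 161117131611, 1736070457357598965366916120615321846374479360321203⟩)))))))
    (.split (.split (.relabel 542310) (.split (.split (.split
    (.leaf ⟨4, 2, 70, 100914161026, 84051307391877120000008388660494664294506240321604⟩) (.split
    (.split (.relabel 43215)
    (.leaf ⟨2, 1, 31, 81108110611, 607480517945771432085137916441460818329653760320002⟩))
    (.leaf ⟨3, 0, 51, 91115170917, 1736070448706299625472845152295420150374479360320403⟩)))
    (.leaf ⟨6, 5, 94, 163123232724, 3472124433207374003572846886925303891148878080961604⟩)) (.split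
    (.split (.leaf ⟨3, 0, 51, 90715071115, 1731741637068007413907462291482312785920080640161201⟩)
    (.split (.split
    (.leaf ⟨1, 2, 13, 30406030504, 577312324060263563132930097165139968000025600160401⟩)
    (.leaf ⟨2, 0, 31, 81110110811, 607480535125640616084299055641460900044852480320802⟩))
    (.leaf ⟨3, 0, 45, 121120150914, 1186314660588264731181062292019708067840076800001203⟩))) (.split
    (.leaf ⟨3, 0, 47, 130912081512, 1736002244687003490713606291456098549760029440481201⟩)
    (.leaf ⟨3, 1, 39, 111416131314, 1736070972753620798292367507757564068454476800481203⟩)))))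
    (.split (.relabel 542310) (.split (.relabel 542310) (.split (.split (.split
    (.leaf ⟨3, 4, 37, 100911111612, 1734686094845359378021750931469139968614480640321203⟩) (.split
    (.leaf ⟨1, 0, 14, 40205040405, 549827969339646676041730097165139968204826880000401⟩)
    (.leaf ⟨2, 0, 23, 110710120908, 57731233267162051920059695392424018329653760000802⟩))) (.split
    (.split (.leaf ⟨3, 6, 33, 91214111512, 1731936972180737002308429152295321600204876800481203⟩)
    (.leaf ⟨2, 0, 27, 81110110811, 1157236340423706024419004514841460900249652480320802⟩)) (.split
    (.leaf ⟨1, 1, 11, 40407050404, 577315768624034955132930097427283968204825600000401⟩)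
    (.leaf ⟨1, 0, 11, 50505070304, 578621438681965268378113278227251282124825600160001⟩)))) (.split
    (.leaf ⟨3, 0, 39, 170811111910, 1736070964163739625938806112295321845964855040321203⟩) (.split
    (.leaf ⟨3, 0, 40, 151313161713, 1736060656242122119521612333357465846374480640481203⟩)
    (.leaf ⟨3, 0, 36, 171117141711, 1736070448767610686946678932019675382169602560481203⟩)))))))))
    (.split (.split (.relabel 543201) (.split (.relabel 543201) (.split (.relabel 542310) (.split
    (.relabel 542310) (.split (.relabel 543201) (.split (.split (.relabel 541032) (.split
    (.relabel 541032)
    (.leaf ⟨3, 0, 31, 221614141414, 1735864291625946563175095011940860150169680640480803⟩))) (.split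
    (.split (.relabel 451032)
    (.leaf ⟨3, 0, 35, 222014141414, 1735854523581825270374256151140860150374480640480803⟩)) (.split
    (.leaf ⟨1, 0, 11, 70504050505, 577315760054501458125311290913587282124826880160401⟩)
    (.leaf ⟨3, 0, 31, 222014161416, 1735864307517325558375933872740860150374480640481203⟩)))))))))
    (.split (.split (.relabel 534201) (.split (.relabel 534201) (.split (.split (.relabel 534201)
    (.relabel 534201)) (.split (.relabel 534201) (.split (.split (.split (.relabel 105432)
    (.leaf ⟨1, 0, 13, 70504040505, 578618166366837093506788365447987282124801280160401⟩)) (.split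
    (.relabel 534201)
    (.leaf ⟨5, 0, 57, 362326242425, 2893107152709910670187123730087936410419334400802005⟩))) (.split
    (.split (.leaf ⟨3, 4, 30, 211313121515, 1731937513407872867720365096343961846374403840481203⟩)
    (.leaf ⟨1, 0, 10, 70605040505, 578618174527275090124516365448020050124826880160401⟩)) (.split
    (.relabel 534201)
    (.leaf ⟨3, 0, 30, 221617151515, 1735864316107260150373549096343994614374480640481203⟩))))))))
    (.split (.split (.relabel 542310) (.split (.split (.split
    (.leaf ⟨3, 0, 54, 121010100419, 1736070964101301403648000000026312868454480640000401⟩) (.split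
    (.split (.relabel 43215)
    (.leaf ⟨3, 0, 50, 131911150818, 1735854506337373199043817127280738304614480640160403⟩))
    (.leaf ⟨3, 0, 49, 131614140816, 1736070457296234620144477808885858304614480640000802⟩))) (.split
    (.leaf ⟨6, 0, 98, 282915151839, 3472141412931081473098571086600798454988807680482406⟩) (.split
    (.split (.leaf ⟨2, 0, 29, 91408060710, 1154625008938477489751695829237825618329600000320802⟩)
    (.leaf ⟨1, 0, 13, 40704050305, 578618174527221402698568963194912768204825600160401⟩))
    (.leaf ⟨3, 0, 41, 151914131119, 1736070474537309772467037814154952786534480640481203⟩))))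
    (.split (.split (.split (.split (.relabel 105432)
    (.leaf ⟨3, 0, 46, 171614121217, 1735854498609757578856922889597845668249680640481203⟩))
    (.leaf ⟨3, 3, 39, 171115111018, 1736070449134883674521602112920060068454480640161203⟩)) (.split
    (.split (.leaf ⟨3, 0, 45, 121416121215, 1731937504756735259181060194304098550374476800481203⟩)
    (.leaf ⟨3, 0, 45, 161714161416, 1735854514928539909802795482480738468044880640481203⟩))
    (.leaf ⟨3, 0, 41, 151315151317, 1736070457295321671173725502845845586534480640481203⟩))) (.split
    (.split (.split (.relabel 105432)
    (.leaf ⟨1, 0, 13, 60605040306, 578618166366783406080840963208020050124826880160401⟩))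
    (.leaf ⟨3, 0, 38, 181414141218, 1736070450056154159548834266506952950374480640481203⟩)) (.split
    (.split (.leaf ⟨3, 0, 40, 151814121215, 1731937513407873135185127019669192950374400000481203⟩)
    (.leaf ⟨1, 1, 10, 60704050505, 578618174527275089806544082042912850124826880160401⟩))
    (.leaf ⟨3, 0, 34, 181715151317, 1736070465947533423201906343306952950374480640481203⟩))))))
    (.split (.relabel 542310) (.split (.relabel 542310) (.split (.split (.split (.split
    (.relabel 105432)
    (.leaf ⟨1, 2, 9, 70404040405, 551130375652035998850744325256020049920026880160401⟩))
    (.leaf ⟨3, 0, 41, 171214151317, 1736070449134883675528239267210920100249680640481203⟩)) (.split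
    (.leaf ⟨6, 0, 78, 342532302533, 3472121346721790251939934534448087286784158720962406⟩)
    (.leaf ⟨3, 0, 33, 171215151216, 1736070457296395413970804030858920100249679360481203⟩))) (.split
    (.split (.split (.relabel 105432)
    (.leaf ⟨1, 0, 11, 70505040505, 578618166366837227724474422407987282124826880160401⟩)) (.split
    (.leaf ⟨3, 0, 30, 211412121515, 1731947281451994294740477558167994614374480640481203⟩)
    (.leaf ⟨3, 0, 31, 221414151415, 1735864291625946563173416975767961846374480640481203⟩))) (.split
    (.split (.leaf ⟨1, 0, 11, 70405040505, 577312495879356498124474422407987282124826880160401⟩)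
    (.leaf ⟨1, 0, 10, 70705050505, 578618174527275090125313283208020050124826880160401⟩)) (.split
    (.leaf ⟨3, 0, 28, 211415111515, 1731947280163504374373419072920060150169680640481203⟩)
    (.leaf ⟨3, 0, 30, 221914181416, 1735864316107260150375933558167994614374480640481203⟩)))))))))))

def subtree15 : Tree :=
  .split (.split (.relabel 542310) (.split (.relabel 453120) (.split subtree13 (.split (.split
    (.relabel 543201) (.split (.relabel 453120) (.split (.relabel 542301) (.split (.split
    (.relabel 542301) (.split
    (.leaf ⟨3, 0, 49, 141804041212, 1736067184592358352765950377354919936614403840480000⟩) (.split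
    (.relabel 453120)
    (.leaf ⟨1, 0, 13, 50605050404, 578690158179105047388671290913619972300825600000401⟩)))) (.split
    (.split (.split (.relabel 453120) (.relabel 453120)) (.split (.relabel 453120)
    (.leaf ⟨3, 0, 42, 141516151313, 1734696076351556587315056151127719948902478080161203⟩))) (.split
    (.split (.relabel 453120) (.relabel 453120)) (.split (.relabel 453120)
    (.leaf ⟨3, 0, 40, 181715141711, 1736070465947479871284733872740827140710455040161203⟩))))))))
    (.split (.split (.split (.relabel 534201) (.split (.split (.relabel 534201) (.relabel 534201))
    (.split (.relabel 534201) (.split (.split (.relabel 453120) (.relabel 453120)) (.split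
    (.relabel 453120)
    (.leaf ⟨3, 0, 44, 151820091013, 1736070474537414462292409466264059912806451200481200⟩))))))
    (.split (.relabel 532401) (.split (.split (.relabel 532401) (.split
    (.leaf ⟨3, 0, 52, 131208041513, 1736001729290767313099816960039321600614403840481202⟩)
    (.leaf ⟨6, 0, 89, 253028232724, 3466640813955367315617886534447923201228953600802406⟩))) (.split
    (.split (.split
    (.leaf ⟨3, 0, 54, 130912061415, 1731730813750421629131819072919961600000080640481202⟩)
    (.leaf ⟨3, 0, 48, 141216131214, 1731947280101119974399149096343961604710478080161203⟩)) (.split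
    (.leaf ⟨5, 8, 62, 202227181922, 2886561663248628545329739884199936009011302400801603⟩)
    (.leaf ⟨3, 0, 39, 151316131215, 1731947305870977437490305056151961612902479360481202⟩))) (.split
    (.split (.leaf ⟨4, 3, 60, 201713092316, 1215235226685323884133139632671948800000003840641604⟩)
    (.leaf ⟨6, 0, 95, 372827183624, 3468017728931168748747085609775923200614407680962406⟩)) (.split
    (.leaf ⟨3, 2, 41, 141515091610, 1736060338414488529099907153303961600204800000481203⟩)
    (.leaf ⟨3, 0, 39, 191517121713, 1736070474537468150373549096343961604710455040481203⟩)))))))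
    (.split (.relabel 453120) (.split (.split (.split (.relabel 524301) (.relabel 524301)) (.split
    (.split (.split (.relabel 453120) (.split
    (.leaf ⟨2, 3, 28, 100811080810, 1154562801020961200853850532098932744192053760000802⟩)
    (.leaf ⟨2, 0, 28, 120709090809, 607487046725665201524100311311974408192053760000802⟩))) (.split
    (.split (.leaf ⟨3, 0, 50, 111113131114, 1731800065801008147008900300839387148492876800480802⟩)
    (.leaf ⟨1, 2, 10, 50504060404, 578618165916939275962471677965139972300825600160001⟩))
    (.leaf ⟨3, 0, 43, 161416171212, 1731947305872104483887410855319961612902478080320403⟩))) (.split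
    (.split (.relabel 453120)
    (.leaf ⟨3, 0, 42, 201213121609, 1736070450056154180655410855319961608192029440001203⟩)) (.split
    (.split (.relabel 453120)
    (.leaf ⟨2, 1, 25, 121208101009, 1157236331874573367054543366416039944601628160320402⟩))
    (.leaf ⟨12, 0, 148, 796249546553, 6944281795070655967421656004192075823513820161924012⟩)))))
    (.split (.split (.split
    (.leaf ⟨3, 0, 52, 91408081513, 1736070448706300028797111500800065536614480640480802⟩) (.split
    (.relabel 453120)
    (.leaf ⟨3, 0, 44, 131517151113, 1736070474476106489151673613693845516902476800161203⟩))) (.split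
    (.leaf ⟨6, 0, 94, 232916163426, 3472140897535006625195521747229179905228910080962406⟩)
    (.leaf ⟨6, 5, 72, 253927252822, 3472135107919105039976628255509905413324953600801606⟩))) (.split
    (.split (.leaf ⟨6, 4, 83, 262924203223, 3472128184309618646631797772818841601228961280962402⟩)
    (.split (.relabel 453120)
    (.leaf ⟨3, 1, 35, 141518131115, 1736070465886330273734332530072059916902476800321203⟩))) (.split
    (.split (.relabel 453120) (.relabel 453120)) (.split (.relabel 453120)
    (.leaf ⟨3, 0, 35, 161918131811,
      1736070474537360776193539849624059904614480640321203⟩)))))))))))) (.split (.relabel 542310)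
    subtree14)

def subtree16 : Tree :=
  .split (.relabel 534210) (.split (.split (.relabel 542310) (.split (.split (.split
    (.relabel 543201) (.split (.relabel 534210) (.split (.split (.relabel 542310) (.split (.split
    (.split (.leaf ⟨4, 0, 72, 1212121215, 268437137915904098304615941120641604⟩) (.split
    (.relabel 143250)
    (.leaf ⟨1, 0, 17, 406060303, 549759258451771526218568957952000000205313280160401⟩))) (.split
    (.leaf ⟨2, 0, 36, 10905061107, 551130375264361781397133721600065536409602560320802⟩) (.split
    (.relabel 143250)
    (.leaf ⟨3, 0, 52, 21616171209, 1680957454173560251615704776704098304614400000321203⟩)))) (.split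
    (.relabel 534210) (.split
    (.leaf ⟨3, 0, 52, 81314071907, 1704460004865179893369304776704098304000003840481200⟩) (.split
    (.relabel 143250)
    (.leaf ⟨4, 0, 66, 152025212208, 2314760632716570512134145835008131084288514560160004⟩))))))
    (.split (.relabel 542310) (.split (.relabel 542310) (.split (.relabel 534210) (.split
    (.leaf ⟨3, 0, 51, 121011122102, 1733322185072717683713539833856000000000003840000002⟩) (.split
    (.relabel 143250)
    (.leaf ⟨6, 0, 98, 242738344008, 3472140949031986626449702387712032768207365120001604⟩)))))))))
    (.split (.relabel 543201) (.split (.relabel 543201) (.split (.split (.relabel 542310) (.split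
    (.split (.relabel 543201) (.split (.split (.split (.relabel 431052) (.relabel 431052))
    (.leaf ⟨1, 0, 16, 40604040404, 578690149589167770715344082043568128204800000160401⟩)) (.split
    (.split (.relabel 431052) (.relabel 431052)) (.split (.relabel 341052)
    (.leaf ⟨1, 0, 14, 40705060405, 578621438702369047053126866043568132300801280160401⟩))))) (.split
    (.split (.leaf ⟨3, 0, 49, 51313061415, 1733177358732654263946077814128738304001539840481203⟩)
    (.split (.split (.relabel 431052) (.relabel 431052))
    (.leaf ⟨1, 0, 15, 30506050303, 551202367463281213326544082042912768000512000000401⟩))) (.split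
    (.leaf ⟨3, 0, 46, 91909071511, 1736067184592358352095700598128738312806403840481200⟩) (.split
    (.split (.relabel 431052) (.relabel 431052))
    (.leaf ⟨3, 0, 41, 121917161512, 1736070474537468149419632246128738316903424000481203⟩))))))
    (.split (.relabel 542310) (.split (.relabel 542310) (.split
    (.leaf ⟨12, 0, 180, 445151515951, 6944283938862781106591740523972624396908550401764411⟩) (.split
    (.leaf ⟨3, 0, 43, 131609121911, 1736070964163632519522451209584640008806403840481203⟩) (.split
    (.split (.relabel 143025)
    (.leaf ⟨1, 0, 13, 50704050505, 578618174527221402698566866043568132300801280160401⟩))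
    (.leaf ⟨3, 0, 40, 141917151711, 1736070474515993313224849112433393668710401280481203⟩))))))))))
    (.split (.relabel 534210) (.split (.relabel 543201) (.split (.relabel 534210) (.split (.split
    (.relabel 543201) (.split (.relabel 543201) (.split (.relabel 534210) (.split (.split
    (.leaf ⟨3, 0, 41, 91614071115, 1734686094844232082672479911293845504615937280481201⟩)
    (.leaf ⟨1, 0, 12, 50505040405, 578690149589167770714505221256019972301313280160401⟩)) (.split
    (.split (.relabel 431052) (.relabel 431052))
    (.leaf ⟨3, 0, 33, 131821151314, 1736070474515993312939638537624059916903424000481203⟩))))))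
    (.split (.relabel 542301) (.split (.split (.relabel 542301) (.split
    (.leaf ⟨3, 0, 41, 131411111415, 1736070964142109364994231516554887176806915840481203⟩)
    (.leaf ⟨3, 0, 37, 131913141414, 1736070989933387977811453558168059912806401280481203⟩))) (.split
    (.relabel 534210) (.split (.split
    (.leaf ⟨3, 0, 38, 161413111614, 1736060656199172447233533558167961608807939840481203⟩)
    (.leaf ⟨3, 0, 32, 181316131911, 1736070450056154563175939849623961608193027840481203⟩)) (.split
    (.split (.leaf ⟨3, 0, 33, 151817121712, 1731937513364869910323898891658952712807938560481203⟩)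
    (.leaf ⟨1, 0, 11, 60705050505, 578618174527221403034113283208019972300801280160401⟩))
    (.leaf ⟨3, 0, 32, 191720151613,
      1736070474537468150375098891672059916699138560481203⟩)))))))))))) (.split (.relabel 542310)
    (.split (.relabel 542310) (.split (.relabel 534210) (.split (.relabel 543201) (.split
    (.relabel 534210) (.split (.relabel 543201) (.split (.relabel 542310) (.split (.relabel 542310)
    (.split (.relabel 534210) (.split (.split (.split
    (.leaf ⟨2, 0, 21, 140809081010, 1154624992617706321232057608464007332045314560320802⟩)
    (.leaf ⟨1, 0, 9, 70504050505, 578618166366837093507585283207987282125313280160401⟩)) (.split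
    (.relabel 534210)
    (.leaf ⟨6, 0, 57, 432825392931, 3471728583251892321045505407791923692750343680962406⟩))) (.split
    (.split (.leaf ⟨4, 2, 36, 281820172020, 2309250009287229768499571216927949128090629120641604⟩)
    (.leaf ⟨1, 0, 9, 70605060505, 578618174527275090125313283207987282125313280160401⟩)) (.split
    (.relabel 534210)
    (.leaf ⟨3, 0, 26, 221815201415,
      1735864316107260150375935655319961846375427840481203⟩))))))))))))))

def subtree17 : Tree :=
  .split (.split (.split subtree7 (.split subtree6 (.split (.split (.split (.split (.split
    (.relabel 543201) (.split (.relabel 543201) (.split (.split (.split (.split (.relabel 541032)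
    (.split (.relabel 534210)
    (.leaf ⟨3, 19, 35, 131108160304, 86593413923523788800083990937600000030745600000000⟩))) (.split
    (.relabel 452310) (.split (.relabel 534210)
    (.leaf ⟨3, 20, 34, 131312150606, 1184730668057261894533203991724032000000076800000000⟩))))
    (.split (.split (.relabel 541032) (.split (.relabel 531042)
    (.leaf ⟨2, 8, 28, 90706110502, 607487047195856732160084095795200000010240064000000⟩))) (.split
    (.relabel 452310)
    (.leaf ⟨6, 26, 82, 242427271408, 2921007301088132716298408401308221440040960000000000⟩))))
    (.split (.relabel 534210) (.split (.split (.relabel 541032) (.split (.relabel 534210)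
    (.leaf ⟨5, 15, 67, 301717251307, 2343351338821910265856210239750799769610265792000000⟩)))
    (.split
    (.leaf ⟨10, 48, 126, 414043313217, 4687357286451087671296001048580587929600000001600000⟩)
    (.leaf ⟨4, 10, 62, 211519171204, 2314760624126689070284968191854510325760000000000000⟩)))))))
    (.split (.split (.split (.relabel 452310)
    (.leaf ⟨11, 35, 163, 262628282410, 55114226166688382984389238194504499200153600000000⟩)) (.split
    (.relabel 452310) (.split (.split
    (.leaf ⟨3, 11, 43, 70907051003, 83906481097984599656916896972800081920025600160000⟩) (.split
    (.split (.leaf ⟨1, 3, 15, 20403020402, 549824533365863428916038965657600081920000000160400⟩)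
    (.leaf ⟨1, 2, 16, 30505030301, 28862352028939403133766965657632768000025600000000⟩))
    (.leaf ⟨2, 6, 28, 40710090503, 1099655947269335049832077931315265536000051200000001⟩))) (.split
    (.leaf ⟨2, 5, 31, 70904030802, 57793251776724887144077826457665617920000128000000⟩)
    (.leaf ⟨3, 6, 48, 81514070902, 1735930115006180779624916897235042304000000000000000⟩)))))
    (.split (.split (.relabel 452310) (.relabel 452310)) (.split (.relabel 452310) (.split (.split
    (.split (.leaf ⟨6, 26, 73, 212013121809, 1264850860608272413496233164800000000000128128320000⟩)
    (.split (.leaf ⟨2, 5, 31, 60507070603, 55044300866717116007239070515232768000025600000002⟩)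
    (.leaf ⟨1, 2, 16, 40304050302, 577247040986860958516038965657600000000025664000000⟩))) (.split
    (.relabel 452310)
    (.leaf ⟨5, 6, 84, 191925251208, 688929977102894104580194829336641699840102400000000⟩))) (.split
    (.split (.leaf ⟨8, 27, 108, 353513123106, 4628119319388248814392233584230465699840000192480000⟩)
    (.leaf ⟨3, 5, 49, 141109141103, 1736070450034679323035278036172800163850240128000000⟩)) (.split
    (.relabel 452310)
    (.leaf ⟨3, 8, 43, 121413151101, 1736070474537414059624916896972832849920000000000000⟩))))))))
    (.split (.relabel 534210) (.split (.split (.split (.relabel 452310)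
    (.leaf ⟨5, 8, 82, 101016161405, 551131064569299992580200595456164249600076800000401⟩)) (.split
    (.relabel 452310) (.split (.relabel 534210)
    (.leaf ⟨3, 3, 51, 91213101200, 1734696601687313455516122873856098467840000000000000⟩)))) (.split
    (.split (.relabel 452310) (.relabel 452310)) (.split (.relabel 452310) (.split (.relabel 534210)
    (.leaf ⟨12, 16, 200, 444445454800, 6944283964845076774920409579520032849920000000000000⟩)))))))
    subtree4) subtree5))) subtree8) (.split (.relabel 534210) (.split (.relabel 453210) (.split
    (.relabel 542310) (.split (.relabel 453210) (.split (.relabel 534210) (.split (.relabel 543201)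
    (.split (.relabel 534210) (.split (.relabel 453210) (.split (.relabel 542310) (.split
    (.relabel 453210) (.split (.relabel 534210) (.split (.split (.split
    (.leaf ⟨4, 0, 52, 222222181516, 2309249985235359223136443710885200036250112256641603⟩)
    (.leaf ⟨4, 0, 44, 222220201516, 2314472665467348641458321117728014418535424256641204⟩))
    (.leaf ⟨6, 0, 64, 353331322423, 3472140900112255304706560119354327532544512384802406⟩)) (.split
    (.relabel 453210)
    (.leaf ⟨1, 0, 10, 60607070404,
      578690158179156050125313283208020050125312064160401⟩))))))))))))))

def subtree18 : Tree :=
  .split (.split (.relabel 534120) (.split (.split (.relabel 542310) (.split (.relabel 534120)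
    (.split (.relabel 543201) (.split (.relabel 534120) (.split (.split (.relabel 542310) (.split
    (.split (.relabel 453201) (.split (.relabel 534120) (.split (.relabel 453201) (.split
    (.leaf ⟨6, 0, 97, 333333313132, 1264871356314310282416073243439933194302466566402406⟩)
    (.leaf ⟨3, 6, 30, 171515181416, 1735860880133270072772582718858859479071746560001203⟩)))))
    (.split (.split (.relabel 534120) (.split
    (.leaf ⟨4, 2, 57, 181519151526, 1215235432758069224867364885023955599392768012801602⟩)
    (.leaf ⟨3, 4, 35, 151517151317, 1736070465886330139233065385367966597152256009601203⟩))) (.split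
    (.relabel 534120) (.split (.split (.relabel 534120) (.relabel 534120)) (.split (.relabel 534120)
    (.leaf ⟨1, 0, 12, 70406060605, 578621438702419915588818179207988920330753280000401⟩)))))))
    (.split (.relabel 542310) (.split (.relabel 542310) (.split (.split (.relabel 534120) (.split
    (.leaf ⟨3, 0, 45, 151013141419, 1736060140781729062281076030871963484192256009601203⟩)
    (.leaf ⟨3, 0, 40, 181115151916, 1736070448706461090407933558167963402251778569601203⟩))) (.split
    (.relabel 534120) (.split
    (.leaf ⟨3, 0, 38, 191414141818, 1736060682012032867721078128023966760991235849601203⟩)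
    (.leaf ⟨3, 0, 36, 201416172016, 1736070465947533424157368794519966760992259849601203⟩)))))))))))
    (.split (.split (.split (.relabel 543201) (.split (.relabel 534120) (.split (.split (.split
    (.relabel 452310)
    (.leaf ⟨5, 0, 84, 110918182016, 2865887717907241107460202692608164249601026560002005⟩)) (.split
    (.relabel 452310) (.split (.split (.relabel 534120) (.split
    (.leaf ⟨2, 1, 28, 30709081010, 1099649066730653116008081915904065699861506566400802⟩)
    (.leaf ⟨2, 1, 27, 40711130709, 1101030345391842158184081916428353699861504000000802⟩))) (.split
    (.relabel 534120)
    (.leaf ⟨6, 0, 89, 153430253621, 3466622775093035498788945395712197099582976012800806⟩)))))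
    (.split (.split (.relabel 452310) (.relabel 452310)) (.split (.relabel 452310) (.split (.split
    (.relabel 534120) (.split (.relabel 452310)
    (.leaf ⟨1, 0, 13, 40406060503, 578690158158754955133768958214144081920513280000401⟩)))
    (.leaf ⟨12, 0, 156, 525054539240, 3642986455516133132703759336741601771618318112003208⟩)))))))
    (.split (.relabel 543201) (.split (.relabel 534102) (.split (.split (.split (.relabel 452310)
    (.leaf ⟨15, 0, 240, 494958585577, 8680323954761346842636582932972012748806163248005213⟩))
    (.split (.relabel 452310) (.split
    (.leaf ⟨9, 7, 124, 283745364540, 5204075992253844110187920632054710435875339545603605⟩) (.split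
    (.leaf ⟨3, 0, 44, 121409071716, 1736060140803203897756120792432738549790723849601201⟩)
    (.leaf ⟨3, 0, 41, 131914141614, 1736060682012033269402859224434049269791232006400403⟩)))))
    (.split (.split (.relabel 452310) (.relabel 452310)) (.split (.relabel 452310) (.split
    (.leaf ⟨9, 0, 123, 363442404045, 5208212921933219823770369308760081039426049283202406⟩) (.split
    (.split (.leaf ⟨1, 0, 12, 50503030804, 578686713615384658125313277952688209930241283200401⟩)
    (.leaf ⟨3, 0, 35, 191313142113, 1736070450056154563175939849586606325790723843201203⟩))
    (.leaf ⟨6, 0, 69, 293627264128, 3472131663355642348751873402474529259581443859202406⟩)))))))))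
    (.split (.relabel 534120) (.split (.relabel 543201) (.split (.relabel 534120) (.split (.split
    (.split (.relabel 453201) (.relabel 453201)) (.split (.relabel 453201) (.split (.relabel 453201)
    (.split (.relabel 534120) (.split (.relabel 453201)
    (.leaf ⟨1, 0, 12, 60607050606, 578690158179156049806546179208020049930753283200401⟩))))))
    (.split (.split (.relabel 542301) (.split (.relabel 542301) (.split (.split
    (.leaf ⟨3, 0, 35, 191213131718, 1736060657101222564344528649624060149782019849601203⟩)
    (.leaf ⟨6, 0, 70, 372425253536, 3389471369598900361309141891888054763581959699202406⟩)) (.split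
    (.leaf ⟨3, 0, 32, 191413141718, 1736060656242229111855415049624060149792259849601203⟩)
    (.leaf ⟨3, 0, 32, 201316161617, 1736070448767663991855412952472027381792259846401203⟩)))))
    (.split (.split (.relabel 452301) (.split (.relabel 534120) (.split (.relabel 452301) (.split
    (.leaf ⟨1, 0, 12, 60605050506, 577315768644385047388671186056020049930241280000401⟩)
    (.leaf ⟨1, 0, 10, 60605060506, 578621438702369047388671186056020049930753280000401⟩))))) (.split
    (.split (.relabel 534120)
    (.leaf ⟨6, 0, 69, 312436252639, 3472141953974876861586485574448120299584517123202406⟩)) (.split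
    (.relabel 534120) (.split
    (.leaf ⟨3, 0, 32, 191614141718, 1736060682012032867722749558168060149792259849601203⟩)
    (.leaf ⟨3, 0, 31, 191620161718,
      1736070474537468016157372988824060149792259846401203⟩))))))))))))) (.split (.relabel 453210)
    (.split (.relabel 542310) (.split (.relabel 453210) (.split (.split (.relabel 543201) (.split
    (.relabel 543201) (.split (.relabel 453210) (.split (.relabel 542310) (.split (.relabel 453210)
    (.split (.split
    (.leaf ⟨9, 0, 106, 303043365550, 4650178271257350954544653141134704887607819542403609⟩) (.split
    (.relabel 453210)
    (.leaf ⟨3, 0, 31, 121221221515, 1736070474476264866407939834681852150375936000001203⟩))) (.split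
    (.leaf ⟨3, 0, 33, 131314122313, 1736070965452230083175939834406502400001539849601203⟩)
    (.leaf ⟨3, 0, 31, 131416172112, 1736070989933543670375939834668646482331137286401203⟩))))))))
    (.split (.relabel 543201) (.split (.relabel 543201) (.split (.relabel 453210) (.split
    (.relabel 542310) (.split (.relabel 453210) (.split (.relabel 543201) (.split (.split
    (.leaf ⟨3, 0, 28, 191712121717, 1736060657530719683175098891672060150374915843201203⟩)
    (.leaf ⟨3, 0, 29, 191716161718, 1736070450056154563175098891672060150375427846401203⟩)) (.split
    (.relabel 453210)
    (.leaf ⟨3, 0, 27, 181820161718,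
      1736070474537468150039556668824060068455939846401203⟩)))))))))))))

def subtree19 : Tree :=
  .split (.relabel 453210) (.split (.split (.relabel 543120) (.split (.relabel 453210) (.split
    (.relabel 542310) (.split (.relabel 453210) (.split (.split (.split (.relabel 543201) (.split
    (.relabel 453210) (.split (.relabel 542310) (.split (.relabel 453210) (.split (.split
    (.relabel 543120) (.split (.relabel 453210) (.split (.relabel 321054)
    (.leaf ⟨2, 0, 22, 101010130909, 57731249587984089628855711065735250329653766400802⟩)))) (.split
    (.relabel 543120) (.split (.relabel 453210) (.split (.relabel 543120)
    (.leaf ⟨1, 0, 11, 60605060505, 578621438702366363034111285932884050124826880000401⟩)))))))))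
    (.split (.split (.relabel 534021) (.split (.split (.relabel 542310) (.split (.relabel 503241)
    (.split (.leaf ⟨3, 0, 51, 180710101915, 1736070964163739498431125651495321845964829446400803⟩)
    (.leaf ⟨3, 0, 45, 180810111916, 1736070964163739491720281194797465845964829449601203⟩))))
    (.split (.split (.split (.relabel 543120) (.split (.relabel 452310)
    (.leaf ⟨3, 3, 38, 121215150915, 1736070474476103401472006292281753600614479366401203⟩))) (.split
    (.relabel 543120)
    (.leaf ⟨3, 0, 45, 111513151416, 1736064117985708874546634817837465764454476809601203⟩))) (.split
    (.split (.relabel 543120) (.split (.relabel 543120)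
    (.leaf ⟨3, 2, 37, 121219161214, 1736070474476211178643134612281819218329676800001203⟩))) (.split
    (.relabel 543120)
    (.leaf ⟨3, 0, 38, 151315131812, 1736070981343609078373549081401753846169625603201203⟩))))))
    (.split (.relabel 453210) (.split (.relabel 542310) (.split (.relabel 453210) (.split (.split
    (.relabel 543120) (.split (.relabel 453210)
    (.leaf ⟨8, 0, 90, 313151513940, 2420877282974892001136650225556128318873804800003208⟩))) (.split
    (.relabel 543120)
    (.leaf ⟨3, 0, 36, 131515152113, 1736070989933543670375939834668646482124878089601203⟩))))))))
    (.split (.split (.relabel 543201) (.split (.relabel 453210) (.split (.relabel 542310) (.split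
    (.relabel 453210) (.split (.relabel 543201) (.split (.relabel 543120) (.split (.relabel 453210)
    (.leaf ⟨6, 0, 67, 383431313536, 3472137513101099366533300884681687532544161296002406⟩))))))))
    (.split (.split (.relabel 534021) (.split (.split (.relabel 542310) (.split (.relabel 503241)
    (.split (.split (.relabel 543120)
    (.leaf ⟨6, 2, 75, 402924243237, 3472140899682811631706048592688054764339233289602406⟩)) (.split
    (.leaf ⟨3, 0, 40, 191312121718, 1736060338414649207853024296343961845760055049601203⟩)
    (.leaf ⟨3, 0, 37, 201413131619, 1736070465947533175853018004887994613964880649601203⟩)))))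
    (.split (.split (.split (.relabel 543120) (.split (.relabel 452310)
    (.leaf ⟨6, 8, 62, 302926253038, 3472123726133366756391258192687988819148961296002406⟩))) (.split
    (.relabel 543120) (.split (.relabel 452310)
    (.leaf ⟨3, 0, 34, 171814151419, 1736070474537315142163626999192060150374479366401203⟩))))
    (.split (.split (.relabel 543120) (.split (.relabel 543120)
    (.leaf ⟨6, 0, 69, 302930272638, 3472130615261161600948895775536120054988958723202406⟩))) (.split
    (.relabel 543120) (.split (.relabel 543120)
    (.leaf ⟨3, 0, 31, 191716131618, 1736070474537414463282346999192060150374480643201203⟩)))))))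
    (.split (.relabel 453210) (.split (.relabel 542310) (.split (.relabel 453210) (.split (.split
    (.relabel 543120) (.split (.relabel 453210)
    (.leaf ⟨3, 0, 31, 151515151219, 1736067021322505194981191335320060150374478080001203⟩))) (.split
    (.relabel 543120) (.split (.relabel 453210)
    (.leaf ⟨6, 0, 56, 373532323534,
      3472140949074936166198607379248087450828961289602406⟩)))))))))))))) subtree18)

/-- A tree settling all cases. Its certificates are dual solutions, scaled to integers, of the
linear programs given by `Relations`. -/
def certificateTree : Tree :=
  .split (.split (.split (.split subtree17 (.split (.split (.split (.relabel 543120) (.split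
    subtree12 (.split (.split subtree10 (.split (.split (.split (.relabel 543201) (.split
    (.relabel 543201) (.split (.split (.relabel 543201) (.split (.relabel 543120) (.split
    (.relabel 452103) (.split
    (.leaf ⟨3, 0, 53, 171711091012, 1731947305933152188702518164850638929950723840321200⟩)
    (.leaf ⟨3, 5, 41, 162010141010, 1735864316107101638230142054564560896030775040000403⟩)))))
    (.split (.split (.relabel 543120) (.split (.relabel 543120) (.split (.relabel 534201)
    (.leaf ⟨3, 5, 41, 211113150808, 1735864290274105338322086909706895605770320640160400⟩))))
    (.split (.relabel 543120) (.split (.relabel 543120) (.split (.relabel 543120)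
    (.leaf ⟨3, 0, 47, 211412151513, 1735864290337455971720359119422193909780560640320803⟩))))))))
    (.split (.split (.split (.relabel 542301) (.split (.relabel 542301)
    (.leaf ⟨4, 5, 66, 201804061414, 2314760598356885294288155464171651399680002560640002⟩))) (.split
    (.split (.relabel 450321) (.split (.relabel 543120) (.split (.relabel 450321)
    (.leaf ⟨3, 0, 51, 121713090912, 1736070474537314872723924598130049024030771200001201⟩))))
    (.split (.split (.relabel 543120)
    (.leaf ⟨3, 6, 44, 121612090912, 1736060673360894990748116598128738549760076800481200⟩)) (.split
    (.relabel 543120)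
    (.leaf ⟨12, 0, 205, 576948373945, 6944273651812662801082194392518886359040153601604807⟩)))))
    (.split (.split (.relabel 542301) (.split (.split (.split (.relabel 543120)
    (.leaf ⟨2, 0, 36, 120505100706, 1102404718177263446279166581800960163840053760160002⟩)) (.split
    (.leaf ⟨2, 3, 31, 100705070606, 1155999209451791214855166372085760163840051200320001⟩)
    (.leaf ⟨1, 0, 16, 60204050303, 578690149567746487427583290900480081920026880000401⟩))) (.split
    (.split (.relabel 543120)
    (.leaf ⟨3, 2, 49, 191005131712, 1653607076684463971722749872701440245790723840480803⟩)) (.split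
    (.leaf ⟨3, 0, 54, 151205081710, 1681084559457353578098091638128640245760000000481203⟩)
    (.leaf ⟨3, 3, 41, 191308141711, 1653607085274398583855409072701505781790723840480803⟩)))))
    (.split (.split (.split (.relabel 543120) (.split (.relabel 452103)
    (.leaf ⟨4, 13, 46, 182217191514, 2314760598275077442259596418745761792041064960000004⟩)))
    (.split (.relabel 543120) (.split (.relabel 452103)
    (.leaf ⟨6, 6, 88, 253725302421, 3472140949074630013883305615687876853821568000001606⟩))))
    (.split (.split (.relabel 543120) (.split (.relabel 543120)
    (.leaf ⟨3, 0, 48, 151313151211, 1736070448706460687083661232701538549770319360001203⟩))) (.split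
    (.relabel 543120) (.split (.relabel 543120)
    (.leaf ⟨3, 0, 46, 171613131712, 1736070465947533289269389232701538549760080640321203⟩))))))))
    subtree9)) subtree11))) subtree15) subtree16)) subtree19) (.split (.relabel 534210) (.split
    (.relabel 453210) (.split (.relabel 543120) (.split (.relabel 534210) (.split (.relabel 453210)
    (.split (.split (.relabel 521430) (.split (.relabel 534210) (.split (.relabel 543201) (.split
    (.relabel 534210) (.split (.relabel 543201) (.split (.relabel 521430) (.split (.split
    (.relabel 453201)
    (.leaf ⟨9, 1, 105, 373739436264, 5208202639845471304951862940257495123767819548872009⟩)) (.split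
    (.relabel 534210) (.split (.relabel 543120)
    (.leaf ⟨3, 0, 31, 171615142220, 1736070989933543670375937752471966761165315849624003⟩))))))))))
    (.split (.relabel 453210) (.split (.relabel 534210) (.split (.relabel 543201) (.split
    (.relabel 534210) (.split (.relabel 453210) (.split (.relabel 543201) (.split (.relabel 453210)
    (.split (.relabel 534210) (.split (.relabel 543120)
    (.leaf ⟨3, 0, 26, 141919132120,
      1736070989933543670040395529624059986535939849616003⟩))))))))))))))))) (.split
    (.relabel 542310) (.split (.relabel 534210) (.split (.relabel 453210) (.split (.relabel 543120)
    (.split (.relabel 534210) (.split (.relabel 453210) (.split (.relabel 542310) (.split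
    (.relabel 453210) (.split (.relabel 534210) (.split (.relabel 543201) (.split (.relabel 534210)
    (.split (.relabel 453210) (.split (.relabel 542310) (.split (.relabel 453210) (.split
    (.relabel 534210)
    (.leaf ⟨6, 0, 55, 323132324848,
      2919633944922856326351879699248120300751879699248120⟩))))))))))))))))

theorem certificateTree_check : certificateTree.check [] triples := by decide +kernel

end Data

end MedianScheme

theorem pessimistic_distortion_median_le_general {m : ℕ} {P : Fin 6 → Fin m → ℝ}
    (hP : ∀ i, IsBudget (P i)) {p : Finset (Fin 6) → Fin m → ℝ}
    (hp : ∀ Q ∈ univ.powersetCard 3, MedianOutcomeOn P Q (p Q)) {v : Fin m → ℝ}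
    (hv : IsBudget v) :
    (1 / 60 : ℝ) * ∑ Q ∈ univ.powersetCard 3, ∑ i ∈ Qᶜ, cost (p Q) (P i) ≤
      1.80 * ((1 / 6 : ℝ) * ∑ i, cost v (P i)) := by
  have hutil : 18 * ∑ i, util v (P i) ≤
      48 + ∑ Q ∈ univ.powersetCard 3, ∑ i ∈ Qᶜ, util (p Q) (P i) :=
    (MedianScheme.relations_of_medianOutcomeOn hP hp hv).mul_utility_le_of_check
      MedianScheme.certificateTree_check
  have hcost : ∑ i, cost v (P i) = 12 - 2 * ∑ i, util v (P i) := by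
    simp only [MedianScheme.cost_eq_two_sub_two_mul_util hv (hP _), sum_sub_distrib, mul_sum]
    norm_num
  have hcost_triple (Q : Finset (Fin 6)) (hQ : Q ∈ univ.powersetCard 3) :
      ∑ i ∈ Qᶜ, cost (p Q) (P i) = 6 - 2 * ∑ i ∈ Qᶜ, util (p Q) (P i) := by
    simp only [MedianScheme.cost_eq_two_sub_two_mul_util (hp Q hQ).1 (hP _), sum_sub_distrib,
      mul_sum, sum_const, card_compl, (mem_powersetCard.1 hQ).2]
    norm_num
  have hcard : #(univ.powersetCard 3 : Finset (Finset (Fin 6))) = 20 := by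
    rw [card_powersetCard]
    rfl
  rw [hcost, sum_congr rfl hcost_triple, sum_sub_distrib, sum_const, hcard, ← mul_sum]
  norm_num
  linarith

/-- The pessimistic distortion of the class of median schemes over 6 voters is at
most 1.80: for every 6-tuple of budgets `(P_1,…,P_6)` and every family of
median-scheme outcomes `p^Q` indexed by the 3-element subsets `Q ⊆ [6]`,
`(1/60) Σ_Q Σ_{i∉Q} d(p^Q, P_i) ≤ 1.80 · (1/6) · min_{v∈𝔹} Σ_i d(v, P_i)`
(the minimum expressed via a minimizer `vopt`). -/
theorem pessimistic_distortion_median_le {m : ℕ} (hm : 1 ≤ m)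
    (P : Fin 6 → Fin m → ℝ) (hP : ∀ i, IsBudget (P i))
    (p : Finset (Fin 6) → (Fin m → ℝ))
    (hp : ∀ Q ∈ Finset.univ.powersetCard 3, MedianOutcomeOn P Q (p Q))
    (vopt : Fin m → ℝ) (hvopt : IsBudget vopt)
    (hmin : ∀ v : Fin m → ℝ, IsBudget v → ∑ i, cost vopt (P i) ≤ ∑ i, cost v (P i)) :
    (1 / 60 : ℝ) * ∑ Q ∈ Finset.univ.powersetCard 3, ∑ i ∈ Qᶜ, cost (p Q) (P i) ≤
      1.80 * ((1 / 6 : ℝ) * ∑ i, cost vopt (P i)) :=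
  pessimistic_distortion_median_le_general hP hp hvopt
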